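/- arXiv:1310.1840 — 5 statements merged into one kernel-verified Lean document; each statement's English description precedes it below -/
import Mathlib

section
/- For every column index i (1 ≤ i ≤ n), the i-th partial derivative of F is Lipschitz continuous along the i-th coordinate direction with constant L_i = max_{1≤j≤m} A_{j,i}²; that is, for all λ ∈ ℝ^n and all t ∈ ℝ, |∇_i F(λ + t e_i) − ∇_i F(λ)| ≤ L_i · |t|, where e_i is the i-th standard basis vector of ℝ^n. -/
open Finset
open scoped BigOperators Classical

noncomputable section

/-- Exponential loss `f(x) = (1/m) Σ_j exp(x_j)` (the normaliser `m` is fixed,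
the index type may vary). -/
def fExp (m : ℕ) {ι : Type} [Fintype ι] (x : ι → ℝ) : ℝ :=
  (1 / (m : ℝ)) * ∑ j, Real.exp (x j)

/-- Gradient of the exponential loss. -/
def gradf (m : ℕ) {ι : Type} [Fintype ι] (x : ι → ℝ) : ι → ℝ :=
  fun j => fderiv ℝ (fExp m (ι := ι)) x (Pi.single j 1)

/-- `F(λ) = log f(Aλ)`. -/
def FObj {mr : Type} [Fintype mr] {n : ℕ} (m : ℕ) (A : Matrix mr (Fin n) ℝ)
    (lam : Fin n → ℝ) : ℝ :=
  Real.log (fExp m (A.mulVec lam))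

/-- Gradient of `F`: `(∇F(λ))_i` is the `i`-th partial derivative. -/
def gradF {mr : Type} [Fintype mr] {n : ℕ} (m : ℕ) (A : Matrix mr (Fin n) ℝ)
    (lam : Fin n → ℝ) : Fin n → ℝ :=
  fun i => fderiv ℝ (FObj m A) lam (Pi.single i 1)

/-- Coordinate-wise Lipschitz constants `L_i = max_j A_{j,i}²`. -/
def Lip {mr : Type} [Fintype mr] {n : ℕ} (A : Matrix mr (Fin n) ℝ) (i : Fin n) : ℝ :=
  ⨆ j, (A j i) ^ 2

/-- `h_{[S]}`: keep the coordinates of `h` in `S`, zero the others. -/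
def restr {n : ℕ} (h : Fin n → ℝ) (S : Finset (Fin n)) : Fin n → ℝ :=
  fun i => if i ∈ S then h i else 0

/-- Expectation over the `τ`-nice sampling (uniform over subsets of cardinality `τ`). -/
def niceExp (n τ : ℕ) (g : Finset (Fin n) → ℝ) : ℝ :=
  (∑ S ∈ Finset.powersetCard τ (Finset.univ : Finset (Fin n)), g S) /
    ((Finset.powersetCard τ (Finset.univ : Finset (Fin n))).card : ℝ)

/-- Expected Separable Overapproximation with constant `β` and weights `L`. -/
def ESO {mr : Type} [Fintype mr] {n : ℕ} (m : ℕ) (A : Matrix mr (Fin n) ℝ)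
    (τ : ℕ) (β : ℝ) : Prop :=
  ∀ x h : Fin n → ℝ,
    niceExp n τ (fun S => FObj m A (x + restr h S)) ≤
      FObj m A x + ((τ : ℝ) / (n : ℝ)) *
        ((∑ i, gradF m A x i * h i) + (β / 2) * ∑ i, Lip A i * h i ^ 2)

/-- ℓ¹ distance from `x` to a set `K`. -/
def D1 {ι : Type} [Fintype ι] (K : Set (ι → ℝ)) (x : ι → ℝ) : ℝ :=
  ⨅ z : K, ∑ j, |x j - (z : ι → ℝ) j|

/-- Kernel of `Aᵀ`. -/
def kerAT {mr : Type} [Fintype mr] {n : ℕ} (A : Matrix mr (Fin n) ℝ) : Set (mr → ℝ) :=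
  {φ | A.transpose.mulVec φ = 0}

/-- `‖g‖_{L⁻¹} = (Σ_i g_i²/L_i)^{1/2}`. -/
def normLinv {mr : Type} [Fintype mr] {n : ℕ} (A : Matrix mr (Fin n) ℝ)
    (g : Fin n → ℝ) : ℝ :=
  Real.sqrt (∑ i, g i ^ 2 / Lip A i)

/-- `γ̃(A,K)`. -/
def gammaT {mr : Type} [Fintype mr] {n : ℕ} (A : Matrix mr (Fin n) ℝ)
    (K : Set (mr → ℝ)) : ℝ :=
  ⨅ φ : {φ : mr → ℝ // φ ∈ K ∧ φ ∉ kerAT A},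
    normLinv A (A.transpose.mulVec (φ : mr → ℝ)) / D1 (K ∩ kerAT A) (φ : mr → ℝ)

/-- Hard core `H(A)`. -/
def hardCore {mr : Type} [Fintype mr] {n : ℕ} (A : Matrix mr (Fin n) ℝ) : Set mr :=
  {j | ∃ φ : mr → ℝ, φ ∈ kerAT A ∧ (∀ k, 0 ≤ φ k) ∧ 0 < φ j}

/-- Parallel Adaboost iterates, given the sequence of sampled coordinate sets. -/
def iter {mr : Type} [Fintype mr] {n : ℕ} (m : ℕ) (A : Matrix mr (Fin n) ℝ) (β : ℝ)
    (lam0 : Fin n → ℝ) (s : ℕ → Finset (Fin n)) : ℕ → Fin n → ℝ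
  | 0 => lam0
  | t + 1 =>
    let lt := iter m A β lam0 s t
    let lt' : Fin n → ℝ := fun i =>
      if i ∈ s t then lt i - (1 / (β * Lip A i)) * gradF m A lt i else lt i
    if FObj m A lt' ≤ FObj m A lt then lt' else lt

lemma gradF_line {m n : ℕ} (hm : 1 ≤ m) (A : Matrix (Fin m) (Fin n) ℝ)
    (i : Fin n) (lam : Fin n → ℝ) (s : ℝ) :
    gradF m A (lam + s • (Pi.single i 1 : Fin n → ℝ)) i =
      (∑ j, A j i * Real.exp (A.mulVec lam j + s * A j i)) /
        (∑ j, Real.exp (A.mulVec lam j + s * A j i)) := by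
  have hm0 : (m : ℝ) ≠ 0 := by positivity
  have : Nonempty (Fin m) := ⟨⟨0, hm⟩⟩
  have hd : DifferentiableAt ℝ (FObj m A) (lam + s • (Pi.single i 1 : Fin n → ℝ)) := by
    unfold FObj fExp Matrix.mulVec dotProduct
    apply DifferentiableAt.log
    · fun_prop
    · have : 0 < ∑ j, Real.exp (∑ k, A j k * (lam + s • (Pi.single i 1 : Fin n → ℝ)) k) :=
        Finset.sum_pos (fun j _ => Real.exp_pos _) Finset.univ_nonempty
      positivity
  have hQ : 0 < ∑ j, Real.exp (A.mulVec lam j + s * A j i) :=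
    Finset.sum_pos (fun j _ => Real.exp_pos _) Finset.univ_nonempty
  unfold gradF
  rw [← hd.lineDeriv_eq_fderiv, lineDeriv]
  have hfun : (fun t : ℝ => FObj m A (lam + s • (Pi.single i 1 : Fin n → ℝ) +
      t • (Pi.single i 1 : Fin n → ℝ))) =
      fun t => Real.log ((1 / (m : ℝ)) * ∑ j, Real.exp (A.mulVec lam j + (s + t) * A j i)) := by
    funext t
    unfold FObj fExp
    congr 3
    funext j
    rw [add_assoc, ← add_smul, Matrix.mulVec_add, Matrix.mulVec_smul]
    simp
  rw [hfun]
  have h1 : ∀ j, HasDerivAt (fun t : ℝ => Real.exp (A.mulVec lam j + (s + t) * A j i))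
      (A j i * Real.exp (A.mulVec lam j + s * A j i)) 0 := by
    intro j
    have := ((((hasDerivAt_id (0 : ℝ)).const_add s).mul_const (A j i)).const_add
      (A.mulVec lam j)).exp
    refine HasDerivAt.congr_deriv this ?_
    simp only [id, add_zero]
    ring
  have h2 := HasDerivAt.fun_sum (u := Finset.univ) (fun j _ => h1 j)
  have h3 := (h2.const_mul (1 / (m : ℝ))).log (by simp only [add_zero]; positivity)
  rw [h3.deriv]
  simp only [add_zero]
  exact mul_div_mul_left _ _ (one_div_ne_zero hm0)

/-- each partial derivative of `F` is Lipschitz along its own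
coordinate direction with constant `L_i = max_j A_{j,i}²`. -/
theorem stmt0 {m n : ℕ} (hm : 1 ≤ m) (hn : 1 ≤ n) (A : Matrix (Fin m) (Fin n) ℝ)
    (i : Fin n) :
    ∀ (lam : Fin n → ℝ) (t : ℝ),
      |gradF m A (lam + t • (Pi.single i 1 : Fin n → ℝ)) i - gradF m A lam i| ≤
        Lip A i * |t| := by
  intro lam t
  have : Nonempty (Fin m) := ⟨⟨0, hm⟩⟩
  have hL : ∀ j, (A j i) ^ 2 ≤ Lip A i := fun j =>
    le_ciSup (f := fun j => (A j i) ^ 2) (Set.finite_range _).bddAbove j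
  have h0 := gradF_line hm A i lam 0
  rw [zero_smul, add_zero] at h0
  rw [gradF_line hm A i lam t, h0]
  set x := A.mulVec lam
  have hQ : ∀ s : ℝ, 0 < ∑ j, Real.exp (x j + s * A j i) := fun s =>
    Finset.sum_pos (fun j _ => Real.exp_pos _) Finset.univ_nonempty
  have h1 : ∀ (s : ℝ) j, HasDerivAt (fun s : ℝ => Real.exp (x j + s * A j i))
      (A j i * Real.exp (x j + s * A j i)) s := by
    intro s j
    have := (((hasDerivAt_id s).mul_const (A j i)).const_add (x j)).exp
    refine HasDerivAt.congr_deriv this ?_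
    simp only [id, add_zero]
    ring
  have hD : ∀ s : ℝ, HasDerivAt (fun s : ℝ => (∑ j, A j i * Real.exp (x j + s * A j i)) /
        (∑ j, Real.exp (x j + s * A j i))) _ s := fun s =>
    (HasDerivAt.fun_sum (u := Finset.univ) (fun j _ => (h1 s j).const_mul (A j i))).fun_div
      (HasDerivAt.fun_sum (u := Finset.univ) (fun j _ => h1 s j)) (hQ s).ne'
  have key := Convex.norm_image_sub_le_of_norm_hasDerivWithin_le (C := Lip A i)
    (fun s (_ : s ∈ Set.univ) => (hD s).hasDerivWithinAt) ?_ convex_univ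
    (Set.mem_univ 0) (Set.mem_univ t)
  · simpa only [Real.norm_eq_abs, sub_zero] using key
  · intro s _
    have hq := hQ s
    have hR : ∑ j, A j i * (A j i * Real.exp (x j + s * A j i)) ≤
        Lip A i * ∑ j, Real.exp (x j + s * A j i) := by
      rw [Finset.mul_sum]
      refine Finset.sum_le_sum fun j _ => ?_
      rw [← mul_assoc, ← sq]
      exact mul_le_mul_of_nonneg_right (hL j) (Real.exp_pos _).le
    have hCS : (∑ j, A j i * Real.exp (x j + s * A j i)) ^ 2 ≤
        (∑ j, A j i * (A j i * Real.exp (x j + s * A j i))) *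
          ∑ j, Real.exp (x j + s * A j i) := by
      refine Finset.sum_sq_le_sum_mul_sum_of_sq_le_mul _ (fun j _ => ?_) (fun j _ => ?_)
        (fun j _ => ?_)
      · rw [← mul_assoc]
        exact mul_nonneg (mul_self_nonneg _) (Real.exp_pos _).le
      · exact (Real.exp_pos _).le
      · exact le_of_eq (by ring)
    set Q := ∑ j, Real.exp (x j + s * A j i)
    set P := ∑ j, A j i * Real.exp (x j + s * A j i)
    set R := ∑ j, A j i * (A j i * Real.exp (x j + s * A j i))
    rw [Real.norm_eq_abs, abs_of_nonneg (div_nonneg (by nlinarith) (sq_nonneg _)),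
      div_le_iff₀ (by positivity)]
    nlinarith [mul_le_mul_of_nonneg_right hR hq.le, sq_nonneg P]

end
end

section
/- Let ω = max_{1≤j≤m} |{ i : A_{j,i} ≠ 0 }| be the maximum number of nonzero entries in a row of A, and for 0 ≤ l ≤ min(ω,τ) set p_l = C(ω,l)·C(n−ω,τ−l)/C(n,τ) and c_l = max(l/ω, (τ−l)/(n−ω)) (with c_l = l/ω when ω = n), and set β = Σ_{k=1}^{min(ω,τ)} min(1, (m·n/τ)·Σ_{l=k}^{min(ω,τ)} c_l p_l). Then F admits a (β, L)-Expected Separable Overapproximation with respect to the τ-nice sampling Ŝ: for all x, h ∈ ℝ^n, E[F(x + h_{[Ŝ]})] ≤ F(x) + (τ/n)·(⟨∇F(x), h⟩ + (β/2)·‖h‖_L²). -/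
open Finset
open scoped BigOperators Classical

noncomputable section

lemma hoeff {m : ℕ} (w d : Fin m → ℝ) (hw : ∀ j, 0 ≤ w j) (hs : ∑ j, w j = 1) (M : ℝ)
    (hM : 0 ≤ M) (hd : ∀ j, |d j| ≤ M) :
    ∑ j, w j * Real.exp (d j) ≤ Real.exp (∑ j, w j * d j + M ^ 2 / 2) := by
  have hs' : ∑ j, ENNReal.ofReal (w j) = 1 := by
    rw [← ENNReal.ofReal_sum_of_nonneg (fun j _ => hw j), hs, ENNReal.ofReal_one]
  let P : PMF (Fin m) := PMF.ofFintype (fun j => ENNReal.ofReal (w j)) hs'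
  have hint : ∀ g : Fin m → ℝ, ∫ j, g j ∂P.toMeasure = ∑ j, w j * g j := by
    intro g
    rw [PMF.integral_eq_sum]
    refine Finset.sum_congr rfl fun j _ => ?_
    simp [P, ENNReal.toReal_ofReal (hw j)]
  have h := (ProbabilityTheory.hasSubgaussianMGF_of_mem_Icc (μ := P.toMeasure) (X := d)
    (a := -M) (b := M) (measurable_of_finite d).aemeasurable
    (Filter.Eventually.of_forall fun j => by
      have := abs_le.1 (hd j); exact ⟨this.1, this.2⟩)).mgf_le 1
  rw [ProbabilityTheory.mgf, hint, hint] at h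
  have e : ((((‖M - -M‖₊ / 2) ^ 2 : NNReal)) : ℝ) * 1 ^ 2 / 2 = M ^ 2 / 2 := by
    push_cast
    rw [Real.norm_eq_abs, abs_of_nonneg (by linarith)]
    ring
  rw [e] at h
  rw [Real.exp_add]
  have h2 : ∑ j, w j * Real.exp (1 * (d j - ∑ i, w i * d i))
      = (∑ j, w j * Real.exp (d j)) / Real.exp (∑ i, w i * d i) := by
    rw [Finset.sum_div]
    refine Finset.sum_congr rfl fun j _ => ?_
    rw [one_mul, Real.exp_sub, mul_div_assoc]
  rw [h2, div_le_iff₀ (Real.exp_pos _)] at h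
  linarith

/-- softmax weights -/
def softW {m : ℕ} (y : Fin m → ℝ) (j : Fin m) : ℝ := Real.exp (y j) / ∑ k, Real.exp (y k)

lemma sumexp_pos {m : ℕ} (hm : 1 ≤ m) (y : Fin m → ℝ) : 0 < ∑ k, Real.exp (y k) := by
  have : Nonempty (Fin m) := ⟨⟨0, hm⟩⟩
  exact Finset.sum_pos (fun j _ => Real.exp_pos _) Finset.univ_nonempty

lemma lse_le {m n : ℕ} (hm : 1 ≤ m) (A : Matrix (Fin m) (Fin n) ℝ) (x u : Fin n → ℝ) (M : ℝ)
    (hM : 0 ≤ M) (hd : ∀ j, |A.mulVec u j| ≤ M) :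
    FObj m A (x + u) ≤ FObj m A x + ∑ j, softW (A.mulVec x) j * A.mulVec u j + M ^ 2 / 2 := by
  have hZ := sumexp_pos hm (A.mulVec x)
  have hZ' := sumexp_pos hm (A.mulVec (x + u))
  have hm' : (0 : ℝ) < 1 / (m : ℝ) := by
    have : (0 : ℝ) < m := by exact_mod_cast hm
    positivity
  have h := hoeff (softW (A.mulVec x)) (A.mulVec u)
    (fun j => div_nonneg (Real.exp_pos _).le hZ.le)
    (by simp only [softW]; rw [← Finset.sum_div, div_self hZ.ne']) M hM hd
  have h2 : ∑ j, softW (A.mulVec x) j * Real.exp (A.mulVec u j)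
      = (∑ k, Real.exp (A.mulVec (x + u) k)) / ∑ k, Real.exp (A.mulVec x k) := by
    rw [Finset.sum_div]
    refine Finset.sum_congr rfl fun j _ => ?_
    rw [Matrix.mulVec_add, Pi.add_apply, Real.exp_add, softW]
    ring
  rw [h2] at h
  have h3 := Real.log_le_log (div_pos hZ' hZ) h
  rw [Real.log_exp, Real.log_div hZ'.ne' hZ.ne'] at h3
  simp only [FObj, fExp]
  rw [Real.log_mul hm'.ne' hZ'.ne', Real.log_mul hm'.ne' hZ.ne']
  linarith

lemma gradF_eq {m n : ℕ} (hm : 1 ≤ m) (A : Matrix (Fin m) (Fin n) ℝ) (x : Fin n → ℝ)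
    (i : Fin n) : gradF m A x i = ∑ j, softW (A.mulVec x) j * A j i := by
  have hZ := sumexp_pos hm (A.mulVec x)
  have hm' : (0 : ℝ) < m := by exact_mod_cast hm
  have hlin : ∀ j, HasFDerivAt (fun y : Fin n → ℝ => A.mulVec y j)
      ((LinearMap.proj j ∘ₗ A.mulVecLin).toContinuousLinearMap) x := by
    intro j
    exact ((LinearMap.proj j ∘ₗ A.mulVecLin).toContinuousLinearMap).hasFDerivAt
  have h1 := HasFDerivAt.fun_sum (u := Finset.univ) (fun j _ => (hlin j).exp)
  have h2 := (h1.const_mul (1 / (m : ℝ))).log (by positivity)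
  have h3 : fderiv ℝ (FObj m A) x = _ := HasFDerivAt.fderiv h2
  simp only [gradF]
  rw [h3]
  simp [softW, Matrix.mulVec_single, Finset.mul_sum]
  refine Finset.sum_congr rfl fun j _ => ?_
  rw [← Finset.mul_sum]
  field_simp

lemma dir_eq {m n : ℕ} (hm : 1 ≤ m) (A : Matrix (Fin m) (Fin n) ℝ) (x u : Fin n → ℝ) :
    ∑ j, softW (A.mulVec x) j * A.mulVec u j = ∑ i, gradF m A x i * u i := by
  simp only [gradF_eq hm, Matrix.mulVec, dotProduct, Finset.mul_sum, Finset.sum_mul]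
  rw [Finset.sum_comm]
  simp only [mul_assoc]

lemma card_mem {n : ℕ} (J : Finset (Fin n)) (i : Fin n) (hi : i ∈ J) (l : ℕ) :
    ((powersetCard l J).filter (fun S => i ∈ S)).card * J.card = l * J.card.choose l := by
  cases l with
  | zero =>
    simp
  | succ l =>
    have h : ((powersetCard (l+1) J).filter (fun S => i ∈ S)).card = (J.card - 1).choose l := by
      have := Finset.card_filter_powersetCard_subset {i} J (l+1)
      simp_all
    rw [h]
    obtain ⟨q, hq⟩ : ∃ q, J.card = q + 1 :=
      ⟨J.card - 1, by have := Finset.card_pos.2 ⟨i, hi⟩; omega⟩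
    rw [hq]
    have := Nat.add_one_mul_choose_eq q l
    simp only [Nat.add_sub_cancel]
    linarith

lemma card_level {n τ : ℕ} (J : Finset (Fin n)) (i : Fin n) (l : ℕ) (hl : l ≤ τ)  :
    (((powersetCard τ (univ : Finset (Fin n))).filter
      (fun S => i ∈ S ∧ (J ∩ S).card = l)).card : ℝ) ≤
    max ((l : ℝ) / (J.card : ℝ)) (((τ : ℝ) - (l : ℝ)) / ((n : ℝ) - (J.card : ℝ))) *
      ((J.card.choose l : ℝ) * ((n - J.card).choose (τ - l) : ℝ)) := by
  have hJn : J.card ≤ n := by simpa using Finset.card_le_univ J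
  have hcc : (Jᶜ).card = n - J.card := by simp [Finset.card_compl]
  by_cases hi : i ∈ J
  · have hpos : 0 < J.card := Finset.card_pos.2 ⟨i, hi⟩
    have h1 : ((powersetCard τ (univ : Finset (Fin n))).filter
      (fun S => i ∈ S ∧ (J ∩ S).card = l)).card ≤
        (((powersetCard l J).filter (fun S => i ∈ S)) ×ˢ powersetCard (τ - l) Jᶜ).card := by
      refine Finset.card_le_card_of_injOn (fun S => (J ∩ S, Jᶜ ∩ S)) ?_ ?_
      · intro S hS
        have := Finset.card_inter_add_card_sdiff S J
        simp_all [Finset.inter_comm, Finset.sdiff_eq_inter_compl]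
        omega
      · intro S _ T _ h
        simp only [Prod.mk.injEq] at h
        ext a
        have h1 := Finset.ext_iff.1 h.1 a
        have h2 := Finset.ext_iff.1 h.2 a
        simp at h1 h2
        tauto
    have h2 := card_mem J i hi l
    rw [Finset.card_product, Finset.card_powersetCard, hcc] at h1
    have h3 : (((powersetCard l J).filter (fun S => i ∈ S)).card : ℝ) =
        (l : ℝ) / (J.card : ℝ) * (J.card.choose l : ℝ) := by
      have hp : (0 : ℝ) < J.card := by exact_mod_cast hpos
      have : (((powersetCard l J).filter (fun S => i ∈ S)).card : ℝ) * J.card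
        = l * J.card.choose l := by exact_mod_cast h2
      field_simp
      linarith
    calc _ ≤ (((powersetCard l J).filter (fun S => i ∈ S)).card : ℝ) *
            ((n - J.card).choose (τ - l) : ℝ) := by exact_mod_cast h1
      _ = (l : ℝ) / (J.card : ℝ) *
          ((J.card.choose l : ℝ) * ((n - J.card).choose (τ - l) : ℝ)) := by rw [h3]; ring
      _ ≤ _ := by
        apply mul_le_mul_of_nonneg_right (le_max_left _ _)
        positivity
  · have hi' : i ∈ Jᶜ := by simpa using hi
    have hpos : 0 < (Jᶜ).card := Finset.card_pos.2 ⟨i, hi'⟩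
    have h1 : ((powersetCard τ (univ : Finset (Fin n))).filter
      (fun S => i ∈ S ∧ (J ∩ S).card = l)).card ≤
        (powersetCard l J ×ˢ ((powersetCard (τ - l) Jᶜ).filter (fun S => i ∈ S))).card := by
      refine Finset.card_le_card_of_injOn (fun S => (J ∩ S, Jᶜ ∩ S)) ?_ ?_
      · intro S hS
        have := Finset.card_inter_add_card_sdiff S J
        simp_all [Finset.inter_comm, Finset.sdiff_eq_inter_compl]
        omega
      · intro S _ T _ h
        simp only [Prod.mk.injEq] at h
        ext a
        have h1 := Finset.ext_iff.1 h.1 a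
        have h2 := Finset.ext_iff.1 h.2 a
        simp at h1 h2
        tauto
    have h2 := card_mem Jᶜ i hi' (τ - l)
    rw [Finset.card_product, Finset.card_powersetCard] at h1
    have hcr : ((Jᶜ).card : ℝ) = (n : ℝ) - (J.card : ℝ) := by rw [hcc, Nat.cast_sub hJn]
    have h3 : (((powersetCard (τ - l) Jᶜ).filter (fun S => i ∈ S)).card : ℝ) =
        ((τ : ℝ) - (l : ℝ)) / ((n : ℝ) - (J.card : ℝ)) *
          ((n - J.card).choose (τ - l) : ℝ) := by
      rw [← hcr, ← hcc, ← Nat.cast_sub hl]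
      have hp : (0 : ℝ) < (Jᶜ).card := by exact_mod_cast hpos
      have : (((powersetCard (τ - l) Jᶜ).filter (fun S => i ∈ S)).card : ℝ) * (Jᶜ).card
        = ((τ - l : ℕ) : ℝ) * (Jᶜ).card.choose (τ - l) := by exact_mod_cast h2
      rw [div_mul_eq_mul_div, eq_div_iff hp.ne']
      exact this
    calc _ ≤ (J.card.choose l : ℝ) *
          (((powersetCard (τ - l) Jᶜ).filter (fun S => i ∈ S)).card : ℝ) := by exact_mod_cast h1
      _ = ((τ : ℝ) - (l : ℝ)) / ((n : ℝ) - (J.card : ℝ)) *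
          ((J.card.choose l : ℝ) * ((n - J.card).choose (τ - l) : ℝ)) := by rw [h3]; ring
      _ ≤ _ := by
        apply mul_le_mul_of_nonneg_right (le_max_right _ _)
        positivity

lemma card_tail {n τ : ℕ} (J : Finset (Fin n)) (i : Fin n) (k ω : ℕ) (hJ : J.card ≤ ω)
    (hω : ω ≤ n) :
    (((powersetCard τ (univ : Finset (Fin n))).filter
      (fun S => i ∈ S ∧ k ≤ (J ∩ S).card)).card : ℝ) ≤
    ∑ l ∈ Finset.Icc k (min ω τ),
      max ((l : ℝ) / (ω : ℝ)) (((τ : ℝ) - (l : ℝ)) / ((n : ℝ) - (ω : ℝ))) *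
      ((ω.choose l : ℝ) * ((n - ω).choose (τ - l) : ℝ)) := by
  obtain ⟨J', hJJ, hJ'⟩ := Finset.exists_superset_card_eq (s := J) hJ (by simpa using hω)
  subst hJ'
  have h1 : ((powersetCard τ (univ : Finset (Fin n))).filter
      (fun S => i ∈ S ∧ k ≤ (J ∩ S).card)) ⊆ (Finset.Icc k (min J'.card τ)).biUnion
      (fun l => (powersetCard τ (univ : Finset (Fin n))).filter
      (fun S => i ∈ S ∧ (J' ∩ S).card = l)) := by
    intro S hS
    simp only [Finset.mem_filter, Finset.mem_powersetCard, Finset.mem_biUnion,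
      Finset.mem_Icc] at hS ⊢
    refine ⟨(J' ∩ S).card, ⟨?_, ?_⟩, hS.1, hS.2.1, rfl⟩
    · exact hS.2.2.trans (Finset.card_le_card (Finset.inter_subset_inter_right hJJ))
    · refine le_min (Finset.card_le_card Finset.inter_subset_left) ?_
      rw [← hS.1.2]
      exact Finset.card_le_card Finset.inter_subset_right
  have h2 := (Finset.card_le_card h1).trans Finset.card_biUnion_le
  calc _ ≤ ((∑ l ∈ Finset.Icc k (min J'.card τ), ((powersetCard τ (univ : Finset (Fin n))).filter
      (fun S => i ∈ S ∧ (J' ∩ S).card = l)).card : ℕ) : ℝ) := by exact_mod_cast h2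
    _ ≤ _ := by
      push_cast
      refine Finset.sum_le_sum fun l hl => card_level J' i l ?_
      have := (Finset.mem_Icc.1 hl).2
      omega

/-- support of row `j` -/
def rowS {m n : ℕ} (A : Matrix (Fin m) (Fin n) ℝ) (j : Fin m) : Finset (Fin n) :=
  Finset.univ.filter fun i : Fin n => A j i ≠ 0

/-- largest overlap of `S` with a row support -/
def ovl {m n : ℕ} (A : Matrix (Fin m) (Fin n) ℝ) (S : Finset (Fin n)) : ℕ :=
  Finset.univ.sup fun j : Fin m => (rowS A j ∩ S).card

lemma A_le_Lip {m n : ℕ} (A : Matrix (Fin m) (Fin n) ℝ) (j : Fin m) (i : Fin n) :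
    (A j i) ^ 2 ≤ Lip A i :=
  le_ciSup (f := fun j => (A j i) ^ 2) (Set.finite_range _).bddAbove j

lemma Lip_nonneg {m n : ℕ} (A : Matrix (Fin m) (Fin n) ℝ) (i : Fin n) : 0 ≤ Lip A i :=
  Real.iSup_nonneg fun _ => sq_nonneg _

lemma row_bound {m n : ℕ} (A : Matrix (Fin m) (Fin n) ℝ) (h : Fin n → ℝ) (S : Finset (Fin n))
    (j : Fin m) :
    (A.mulVec (restr h S) j) ^ 2 ≤ (ovl A S : ℝ) * ∑ i ∈ S, Lip A i * h i ^ 2 := by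
  have e : A.mulVec (restr h S) j = ∑ i ∈ rowS A j ∩ S, A j i * h i := by
    simp only [Matrix.mulVec, dotProduct, restr]
    symm
    apply Finset.sum_subset_zero_on_sdiff (Finset.subset_univ _)
    · intro i hi
      simp [rowS] at hi
      by_cases hA : A j i = 0
      · simp [hA]
      · simp [hi hA]
    · intro i hi
      rw [Finset.mem_inter] at hi
      simp [hi.2]
  rw [e]
  refine sq_sum_le_card_mul_sum_sq.trans ?_
  have h1 : ((rowS A j ∩ S).card : ℝ) ≤ (ovl A S : ℝ) := by
    exact_mod_cast Finset.le_sup (f := fun j : Fin m => (rowS A j ∩ S).card) (Finset.mem_univ j)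
  have h2 : ∑ i ∈ rowS A j ∩ S, (A j i * h i) ^ 2 ≤ ∑ i ∈ S, Lip A i * h i ^ 2 := by
    calc _ ≤ ∑ i ∈ rowS A j ∩ S, Lip A i * h i ^ 2 := by
          refine Finset.sum_le_sum fun i _ => ?_
          rw [mul_pow]
          exact mul_le_mul_of_nonneg_right (A_le_Lip A j i) (sq_nonneg _)
      _ ≤ _ := Finset.sum_le_sum_of_subset_of_nonneg Finset.inter_subset_right
          (fun i _ _ => mul_nonneg (Lip_nonneg A i) (sq_nonneg _))
  exact mul_le_mul h1 h2 (Finset.sum_nonneg fun i _ => sq_nonneg _) (by positivity)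

lemma point_bound {m n : ℕ} (hm : 1 ≤ m) (A : Matrix (Fin m) (Fin n) ℝ) (x h : Fin n → ℝ)
    (S : Finset (Fin n)) :
    FObj m A (x + restr h S) ≤ FObj m A x + ∑ i, (if i ∈ S then gradF m A x i * h i else 0)
      + ((ovl A S : ℝ) * ∑ i ∈ S, Lip A i * h i ^ 2) / 2 := by
  have hnn : 0 ≤ (ovl A S : ℝ) * ∑ i ∈ S, Lip A i * h i ^ 2 :=
    mul_nonneg (by positivity)
      (Finset.sum_nonneg fun i _ => mul_nonneg (Lip_nonneg A i) (sq_nonneg _))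
  have := lse_le hm A x (restr h S) (Real.sqrt ((ovl A S : ℝ) * ∑ i ∈ S, Lip A i * h i ^ 2))
    (Real.sqrt_nonneg _) (fun j => Real.abs_le_sqrt (row_bound A h S j))
  rw [Real.sq_sqrt hnn, dir_eq hm] at this
  simpa [restr] using this

lemma card_memR {n τ : ℕ} (hn : 1 ≤ n) (i : Fin n) :
    (((powersetCard τ (univ : Finset (Fin n))).filter (fun S => i ∈ S)).card : ℝ)
      = (n.choose τ : ℝ) * ((τ : ℝ) / n) := by
  have h := card_mem (univ : Finset (Fin n)) i (Finset.mem_univ i) τ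
  have hp : (0 : ℝ) < n := by exact_mod_cast hn
  rw [Finset.card_univ, Fintype.card_fin] at h
  have h' : (((powersetCard τ (univ : Finset (Fin n))).filter (fun S => i ∈ S)).card : ℝ) * n
    = τ * n.choose τ := by exact_mod_cast h
  rw [← mul_div_assoc, eq_div_iff hp.ne']
  linarith

lemma card_ovl {m n τ ω : ℕ} (hm : 1 ≤ m) (A : Matrix (Fin m) (Fin n) ℝ) (i : Fin n) (k : ℕ)
    (hk : 1 ≤ k) (hJ : ∀ j, (rowS A j).card ≤ ω) (hω : ω ≤ n) :
    (((powersetCard τ (univ : Finset (Fin n))).filter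
      (fun S => i ∈ S ∧ k ≤ ovl A S)).card : ℝ) ≤
    m * ∑ l ∈ Finset.Icc k (min ω τ),
      max ((l : ℝ) / (ω : ℝ)) (((τ : ℝ) - (l : ℝ)) / ((n : ℝ) - (ω : ℝ))) *
      ((ω.choose l : ℝ) * ((n - ω).choose (τ - l) : ℝ)) := by
  have h1 : ((powersetCard τ (univ : Finset (Fin n))).filter
      (fun S => i ∈ S ∧ k ≤ ovl A S)) ⊆ (univ : Finset (Fin m)).biUnion
      (fun j => (powersetCard τ (univ : Finset (Fin n))).filter
      (fun S => i ∈ S ∧ k ≤ (rowS A j ∩ S).card)) := by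
    intro S hS
    simp only [Finset.mem_filter, Finset.mem_biUnion] at hS ⊢
    obtain ⟨j, hj, hj'⟩ := (Finset.le_sup_iff (Nat.lt_of_lt_of_le Nat.zero_lt_one hk)).1 hS.2.2
    exact ⟨j, hj, hS.1, hS.2.1, hj'⟩
  have h2 := (Finset.card_le_card h1).trans Finset.card_biUnion_le
  calc _ ≤ ((∑ j : Fin m, ((powersetCard τ (univ : Finset (Fin n))).filter
      (fun S => i ∈ S ∧ k ≤ (rowS A j ∩ S).card)).card : ℕ) : ℝ) := by exact_mod_cast h2
    _ ≤ _ := by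
      push_cast
      refine (Finset.sum_le_sum fun j _ => card_tail (rowS A j) i k ω (hJ j) hω).trans ?_
      simp

/-- `(F, Ŝ) ∼ ESO(β, L)` for the `τ`-nice sampling, with the
explicit `β` built from `ω`, `p_l` and `c_l`. -/
theorem stmt1 {m n : ℕ} (hm : 1 ≤ m) (hn : 1 ≤ n) (A : Matrix (Fin m) (Fin n) ℝ)
    (hA : ∀ i : Fin n, ∃ j : Fin m, A j i ≠ 0)
    (τ : ℕ) (hτ1 : 1 ≤ τ) (hτn : τ ≤ n)
    (ω : ℕ)
    (hω : ω = Finset.univ.sup fun j : Fin m =>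
        (Finset.univ.filter fun i : Fin n => A j i ≠ 0).card)
    (p c : ℕ → ℝ)
    (hp : ∀ l, p l = ((ω.choose l : ℝ) * ((n - ω).choose (τ - l) : ℝ)) / (n.choose τ : ℝ))
    (hc : ∀ l, c l = max ((l : ℝ) / (ω : ℝ)) (((τ : ℝ) - (l : ℝ)) / ((n : ℝ) - (ω : ℝ))))
    (β : ℝ)
    (hβ : β = ∑ k ∈ Finset.Icc 1 (min ω τ),
        min 1 (((m : ℝ) * (n : ℝ) / (τ : ℝ)) * ∑ l ∈ Finset.Icc k (min ω τ), c l * p l)) :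
    ESO m A τ β := by
  have hJ : ∀ j, (rowS A j).card ≤ ω := by
    intro j
    rw [hω]
    exact Finset.le_sup (f := fun j : Fin m =>
        (Finset.univ.filter fun i : Fin n => A j i ≠ 0).card) (Finset.mem_univ j)
  have hωn : ω ≤ n := by
    rw [hω]
    refine Finset.sup_le fun j _ => ?_
    simpa using Finset.card_le_univ (Finset.univ.filter fun i : Fin n => A j i ≠ 0)
  have hnR : (0 : ℝ) < n := by exact_mod_cast hn
  have hτR : (0 : ℝ) < τ := by exact_mod_cast hτ1
  have hNR : (0 : ℝ) < (n.choose τ : ℝ) := by exact_mod_cast Nat.choose_pos hτn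
  intro x h
  have hov : ∀ S ∈ powersetCard τ (univ : Finset (Fin n)),
      (ovl A S : ℝ) = ∑ k ∈ Finset.Icc 1 (min ω τ), if k ≤ ovl A S then (1 : ℝ) else 0 := by
    intro S hS
    have hle : ovl A S ≤ min ω τ := by
      refine Finset.sup_le fun j _ => le_min ?_ ?_
      · exact (Finset.card_le_card Finset.inter_subset_left).trans (hJ j)
      · rw [← (Finset.mem_powersetCard.1 hS).2]
        exact Finset.card_le_card Finset.inter_subset_right
    rw [← Finset.sum_filter, Finset.sum_const, nsmul_eq_mul, mul_one]
    have : (Finset.Icc 1 (min ω τ)).filter (fun k => k ≤ ovl A S) = Finset.Icc 1 (ovl A S) := by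
      ext k
      simp only [Finset.mem_filter, Finset.mem_Icc]
      omega
    rw [this, Nat.card_Icc]
    simp
  -- first-order term
  have hlin : ∑ S ∈ powersetCard τ (univ : Finset (Fin n)),
      ∑ i, (if i ∈ S then gradF m A x i * h i else 0)
      = (n.choose τ : ℝ) * ((τ : ℝ) / n) * ∑ i, gradF m A x i * h i := by
    rw [Finset.sum_comm, Finset.mul_sum]
    refine Finset.sum_congr rfl fun i _ => ?_
    rw [← Finset.sum_filter, Finset.sum_const, nsmul_eq_mul, card_memR hn]
  -- second-order term
  have hquad : ∑ S ∈ powersetCard τ (univ : Finset (Fin n)),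
      ((ovl A S : ℝ) * ∑ i ∈ S, Lip A i * h i ^ 2)
      ≤ (n.choose τ : ℝ) * ((τ : ℝ) / n) * (β * ∑ i, Lip A i * h i ^ 2) := by
    have e1 : ∑ S ∈ powersetCard τ (univ : Finset (Fin n)),
        ((ovl A S : ℝ) * ∑ i ∈ S, Lip A i * h i ^ 2)
        = ∑ k ∈ Finset.Icc 1 (min ω τ), ∑ i, (((powersetCard τ (univ : Finset (Fin n))).filter
          (fun S => i ∈ S ∧ k ≤ ovl A S)).card : ℝ) * (Lip A i * h i ^ 2) := by
      have e2 : ∀ S ∈ powersetCard τ (univ : Finset (Fin n)),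
          ((ovl A S : ℝ) * ∑ i ∈ S, Lip A i * h i ^ 2) =
          ∑ k ∈ Finset.Icc 1 (min ω τ), ∑ i,
            if (i ∈ S ∧ k ≤ ovl A S) then Lip A i * h i ^ 2 else 0 := by
        intro S hS
        rw [hov S hS, Finset.sum_mul]
        refine Finset.sum_congr rfl fun k _ => ?_
        by_cases hk : k ≤ ovl A S <;> simp [hk]
      rw [Finset.sum_congr rfl e2, Finset.sum_comm]
      refine Finset.sum_congr rfl fun k _ => ?_
      rw [Finset.sum_comm]
      refine Finset.sum_congr rfl fun i _ => ?_
      rw [← Finset.sum_filter, Finset.sum_const, nsmul_eq_mul]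
    rw [e1, hβ, Finset.sum_mul, Finset.mul_sum]
    refine Finset.sum_le_sum fun k hk => ?_
    rw [Finset.mul_sum, Finset.mul_sum]
    refine Finset.sum_le_sum fun i _ => ?_
    rw [← mul_assoc (_ * _) (min _ _)]
    refine mul_le_mul_of_nonneg_right ?_ (mul_nonneg (Lip_nonneg A i) (sq_nonneg _))
    rw [mul_min_of_nonneg _ _ (by positivity)]
    refine le_min ?_ ?_
    · rw [mul_one, ← card_memR hn i]
      exact_mod_cast Finset.card_le_card (fun S hS => by
        simp only [Finset.mem_filter] at hS ⊢
        exact ⟨hS.1, hS.2.1⟩)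
    · refine (card_ovl hm A i k (Finset.mem_Icc.1 hk).1 hJ hωn).trans (le_of_eq ?_)
      have e3 : ∑ l ∈ Finset.Icc k (min ω τ),
          max ((l : ℝ) / (ω : ℝ)) (((τ : ℝ) - (l : ℝ)) / ((n : ℝ) - (ω : ℝ))) *
          ((ω.choose l : ℝ) * ((n - ω).choose (τ - l) : ℝ))
          = (n.choose τ : ℝ) * ∑ l ∈ Finset.Icc k (min ω τ), c l * p l := by
        rw [Finset.mul_sum]
        refine Finset.sum_congr rfl fun l _ => ?_
        rw [hc, hp]
        field_simp
      rw [e3]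
      field_simp
  unfold niceExp
  have hcard : ((powersetCard τ (univ : Finset (Fin n))).card : ℝ) = (n.choose τ : ℝ) := by
    simp
  rw [hcard, div_le_iff₀ hNR]
  refine (Finset.sum_le_sum fun S _ => point_bound hm A x h S).trans ?_
  rw [Finset.sum_add_distrib, Finset.sum_add_distrib, Finset.sum_const, nsmul_eq_mul, hcard, hlin,
    ← Finset.sum_div]
  linarith

end
end

section
/- Let λ ∈ ℝ^n and define δ ∈ ℝ^n by δ_i = −(1/(β L_i))·∇_i F(λ) for every i. Then the expectation over the τ-nice sampling Ŝ of the value after the parallel coordinate update satisfies E[F(λ + δ_{[Ŝ]})] ≤ F(λ) − (τ/(2βn))·‖∇F(λ)‖_{L^{-1}}², where ‖g‖_{L^{-1}} = (Σ_{i=1}^n g_i²/L_i)^{1/2}. -/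
open Finset
open scoped BigOperators Classical

noncomputable section

/-- the expected value after the parallel coordinate update with
steps `δ_i = −(1/(βL_i))∇_iF(λ)` decreases `F` by `(τ/(2βn))·‖∇F(λ)‖_{L⁻¹}²`. -/
theorem stmt3 {m n : ℕ} (hm : 1 ≤ m) (hn : 1 ≤ n) (A : Matrix (Fin m) (Fin n) ℝ)
    (hA : ∀ i : Fin n, ∃ j : Fin m, A j i ≠ 0)
    (τ : ℕ) (hτ1 : 1 ≤ τ) (hτn : τ ≤ n)
    (β : ℝ) (hβ : 0 < β) (hESO : ESO m A τ β)
    (lam : Fin n → ℝ)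
    (δ : Fin n → ℝ) (hδ : ∀ i, δ i = -(1 / (β * Lip A i)) * gradF m A lam i) :
    niceExp n τ (fun S => FObj m A (lam + restr δ S)) ≤
      FObj m A lam - (τ : ℝ) / (2 * β * (n : ℝ)) * ∑ i, gradF m A lam i ^ 2 / Lip A i := by
  have hL : ∀ i, Lip A i ≠ 0 := by
    intro i
    obtain ⟨j, hj⟩ := hA i
    have h1 : (A j i) ^ 2 ≤ Lip A i :=
      le_ciSup (f := fun j => (A j i) ^ 2) (Set.finite_range _).bddAbove j
    have h2 : 0 < (A j i) ^ 2 := by positivity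
    exact (lt_of_lt_of_le h2 h1).ne'
  refine (hESO lam δ).trans (le_of_eq ?_)
  have hn0 : (n : ℝ) ≠ 0 := by
    have : n ≠ 0 := by omega
    exact_mod_cast this
  have key : (∑ i, gradF m A lam i * δ i) + (β / 2) * ∑ i, Lip A i * δ i ^ 2
      = -(1 / (2 * β)) * ∑ i, gradF m A lam i ^ 2 / Lip A i := by
    rw [Finset.mul_sum, Finset.mul_sum, ← Finset.sum_add_distrib]
    refine Finset.sum_congr rfl fun i _ => ?_
    have := hL i
    rw [hδ i]
    field_simp
    ring
  rw [key]
  field_simp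
  ring

end
end

section
/- Suppose 1 ≤ |H(A)| ≤ m−1, and order the rows so that A = [A₀; A₊] where A₊ collects the rows in H(A). Fix λ⁰ ∈ ℝ^n and let C₊ ⊆ ℝ^{m₊} be a compact axis-aligned rectangle containing { x ∈ Im(A₊) : f(x) ≤ f(Aλ⁰) }. Let K = ℝ₊^{m₀} × ∇f(C₊) and assume: (i) f̄_A > 0 and inf_{μ∈ℝ^n} f(A₊μ) = f̄_A; (ii) γ̃ := γ̃(A, K) > 0; (iii) c̃ > 0 and w̃ ≥ 0 are constants such that for every λ with f(Aλ) ≤ f(Aλ⁰), F(λ) − log f̄_A ≤ ((1 + 2w̃/c̃)/f(A₊λ)) · D¹_{K ∩ Ker(Aᵀ)}(∇f(Aλ)); and (iv) β > 0 satisfies the ESO. Let (λ^t)_{t≥0} be the Parallel Adaboost iterates started at λ⁰. Then for every 0 < ε < 2f̄_A, every ρ ∈ (0,1), and every integer T ≥ (4βn/τ) · ((1 + 2w̃/c̃)²/γ̃²) · (f(Aλ⁰)²/f̄_A) · (1/ε) · (1 + log(1/ρ)) + 2, one has P( f(Aλ^T) − f̄_A ≤ ε ) ≥ 1 − ρ.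 -/
open Finset
open scoped BigOperators Classical

noncomputable section

/-- Generic run of a process driven by a sequence of samples. -/
def runProc {X Ω : Type} (step : X → Ω → X) (x0 : X) (s : ℕ → Ω) : ℕ → X
  | 0 => x0
  | t + 1 => step (runProc step x0 s t) (s t)

lemma runProc_congr {X Ω : Type} (step : X → Ω → X) (x0 : X) (s s' : ℕ → Ω) (t : ℕ)
    (h : ∀ k < t, s k = s' k) : runProc step x0 s t = runProc step x0 s' t := by
  induction t with
  | zero => rfl
  | succ t ih =>
    simp only [runProc]
    rw [ih (fun k hk => h k (by omega)), h t (by omega)]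

/-- Extension of a finite sequence. -/
def extSeq {Ω : Type} (d : Ω) {T : ℕ} (s : Fin T → Ω) : ℕ → Ω :=
  fun t => if h : t < T then s ⟨t, h⟩ else d

lemma runProc_snoc {X Ω : Type} (step : X → Ω → X) (x0 : X) (d : Ω) {t : ℕ} (s : Fin t → Ω)
    (w : Ω) : runProc step x0 (extSeq d (Fin.snoc (α := fun _ => Ω) s w)) (t + 1) =
      step (runProc step x0 (extSeq d s) t) w := by
  have h1 : runProc step x0 (extSeq d (Fin.snoc (α := fun _ => Ω) s w)) t =
      runProc step x0 (extSeq d s) t := by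
    apply runProc_congr
    intro k hk
    have hk' : k < t + 1 := by omega
    simp [extSeq, Fin.snoc, hk, hk']
  have h2 : extSeq d (Fin.snoc (α := fun _ => Ω) s w) t = w := by
    simp [extSeq, Fin.snoc]
  simp only [runProc]
  rw [h1, h2]

lemma sum_piFinset_snoc {Ω : Type} (P : Finset Ω) (t : ℕ) (G : (Fin (t + 1) → Ω) → ℝ) :
    ∑ s ∈ Fintype.piFinset (fun _ : Fin (t + 1) => P), G s =
      ∑ s ∈ Fintype.piFinset (fun _ : Fin t => P), ∑ w ∈ P,
        G (Fin.snoc (α := fun _ => Ω) s w) := by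
  rw [← Finset.sum_product']
  refine Finset.sum_bij' (fun s _ => (Fin.init s, s (Fin.last t)))
    (fun p _ => Fin.snoc (α := fun _ => Ω) p.1 p.2) ?_ ?_ ?_ ?_ ?_
  · intro s hs
    simp only [Fintype.mem_piFinset, Finset.mem_product] at hs ⊢
    exact ⟨fun i => hs _, hs _⟩
  · intro p hp
    simp only [Fintype.mem_piFinset, Finset.mem_product] at hp ⊢
    intro i
    refine Fin.lastCases ?_ (fun j => ?_) i
    · simpa using hp.2
    · simpa using hp.1 j
  · intro s hs
    simp
  · intro p hp
    simp
  · intro s hs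
    simp

lemma process_bound {X Ω : Type} (step : X → Ω → X) (x0 : X) (d : Ω) (P : Finset Ω)
    (hP : 0 < P.card) (Good : X → Prop) (D : X → ℝ) (c : ℝ) (hc : 0 < c)
    (hG0 : Good x0) (hGs : ∀ x w, Good x → Good (step x w))
    (hD0 : ∀ x, 0 ≤ D x) (hDm : ∀ x w, D (step x w) ≤ D x)
    (hDs : ∀ x, Good x → ∑ w ∈ P, D (step x w) ≤ (P.card : ℝ) * (D x - D x ^ 2 / c))
    (e : ℝ) (he : 0 < e) (ρ : ℝ) (hρ0 : 0 < ρ) (hρ1 : ρ < 1) (T : ℕ)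
    (hT : (T : ℝ) ≥ c / e * (1 + Real.log (1 / ρ)) + 2) :
    (((Fintype.piFinset (fun _ : Fin T => P)).filter
      (fun s => ¬ D (runProc step x0 (extSeq d s) T) ≤ e)).card : ℝ) ≤
      ρ * ((Fintype.piFinset (fun _ : Fin T => P)).card : ℝ) := by
  have hN : (0 : ℝ) < P.card := by exact_mod_cast hP
  set G : X → ℝ := fun x => if D x < e then 0 else D x with hGdef
  have hGn : ∀ x, 0 ≤ G x := by
    intro x; simp only [hGdef]; split_ifs
    · exact le_rfl
    · exact hD0 x
  have hGD : ∀ x, G x ≤ D x := by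
    intro x; simp only [hGdef]; split_ifs
    · exact hD0 x
    · exact le_rfl
  have hGe : ∀ x, e * G x ≤ G x ^ 2 := by
    intro x; simp only [hGdef]; split_ifs with h
    · simp
    · nlinarith
  have hGstep : ∀ x, Good x → ∑ w ∈ P, G (step x w) ≤ (P.card : ℝ) * (G x - G x ^ 2 / c) := by
    intro x hx
    by_cases h : D x < e
    · have h1 : ∀ w ∈ P, G (step x w) = 0 := by
        intro w _
        have := lt_of_le_of_lt (hDm x w) h
        simp [hGdef, this]
      rw [Finset.sum_eq_zero h1]
      simp [hGdef, h]
    · have : G x = D x := by simp [hGdef, h]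
      rw [this]
      exact (Finset.sum_le_sum (fun w _ => hGD _)).trans (hDs x hx)
  have hgood : ∀ s t, Good (runProc step x0 s t) := by
    intro s t
    induction t with
    | zero => exact hG0
    | succ t ih => exact hGs _ _ ih
  -- trivial bounds on the size
  have hGc : G x0 ≤ c := by
    have h1 := hGstep x0 hG0
    have h2 : 0 ≤ ∑ w ∈ P, G (step x0 w) := Finset.sum_nonneg (fun w _ => hGn _)
    have h3 : 0 ≤ G x0 - G x0 ^ 2 / c := by
      by_contra h
      push Not at h
      nlinarith
    have h4 : G x0 ^ 2 / c ≤ G x0 := by linarith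
    rw [div_le_iff₀ hc] at h4
    by_contra h
    push Not at h
    nlinarith
  set E : ℕ → ℝ := fun t => ∑ s ∈ Fintype.piFinset (fun _ : Fin t => P),
    G (runProc step x0 (extSeq d s) t) with hE
  have hcard : ∀ t, ((Fintype.piFinset (fun _ : Fin t => P)).card : ℝ) = (P.card : ℝ) ^ t := by
    intro t; simp
  have hEstep : ∀ t, E (t + 1) ≤ P.card * (E t - (∑ s ∈ Fintype.piFinset (fun _ : Fin t => P),
      G (runProc step x0 (extSeq d s) t) ^ 2) / c) := by
    intro t
    simp only [hE]
    rw [sum_piFinset_snoc]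
    simp only [runProc_snoc]
    rw [Finset.sum_div, ← Finset.sum_sub_distrib, Finset.mul_sum]
    exact Finset.sum_le_sum (fun s _ => hGstep _ (hgood _ _))
  set θ : ℕ → ℝ := fun t => E t / (P.card : ℝ) ^ t with hθ
  have hEn : ∀ t, 0 ≤ E t := fun t => Finset.sum_nonneg (fun s _ => hGn _)
  have hθn : ∀ t, 0 ≤ θ t := fun t => div_nonneg (hEn t) (by positivity)
  have hEθ : ∀ t, E t = θ t * (P.card : ℝ) ^ t := by
    intro t; simp only [hθ]; field_simp
  have hθ1 : ∀ t, θ (t + 1) ≤ θ t - θ t ^ 2 / c := by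
    intro t
    have h1 := hEstep t
    have h2 : θ t ^ 2 * (P.card : ℝ) ^ t ≤ ∑ s ∈ Fintype.piFinset (fun _ : Fin t => P),
      G (runProc step x0 (extSeq d s) t) ^ 2 := by
      have h3 : 0 ≤ ∑ s ∈ Fintype.piFinset (fun _ : Fin t => P),
        (G (runProc step x0 (extSeq d s) t) - θ t) ^ 2 :=
        Finset.sum_nonneg (fun s _ => sq_nonneg _)
      simp only [sub_sq, Finset.sum_add_distrib, Finset.sum_sub_distrib, Finset.sum_const,
        nsmul_eq_mul, hcard, ← Finset.sum_mul, ← Finset.mul_sum] at h3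
      have h4 := hEθ t
      simp only [hE] at h4
      rw [h4] at h3
      nlinarith
    have h5 : E (t + 1) ≤ P.card * (θ t * (P.card : ℝ) ^ t - θ t ^ 2 * (P.card : ℝ) ^ t / c) := by
      refine h1.trans ?_
      rw [← hEθ t]
      exact mul_le_mul_of_nonneg_left (sub_le_sub_left (div_le_div_of_nonneg_right h2 hc.le) _) hN.le
    have h6 : θ (t + 1) * (P.card : ℝ) ^ (t + 1) ≤
        (θ t - θ t ^ 2 / c) * (P.card : ℝ) ^ (t + 1) := by
      rw [← hEθ]
      refine h5.trans (le_of_eq ?_)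
      rw [pow_succ]; ring
    exact le_of_mul_le_mul_right h6 (pow_pos hN _)
  have hθ2 : ∀ t, θ (t + 1) ≤ (1 - e / c) * θ t := by
    intro t
    have h1 := hEstep t
    have h2 : e * E t ≤ ∑ s ∈ Fintype.piFinset (fun _ : Fin t => P),
      G (runProc step x0 (extSeq d s) t) ^ 2 := by
      simp only [hE]
      rw [Finset.mul_sum]
      exact Finset.sum_le_sum (fun s _ => hGe _)
    have h5 : E (t + 1) ≤ P.card * (E t - e * E t / c) := by
      refine h1.trans ?_
      exact mul_le_mul_of_nonneg_left (sub_le_sub_left (div_le_div_of_nonneg_right h2 hc.le) _) hN.le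
    have h6 : θ (t + 1) * (P.card : ℝ) ^ (t + 1) ≤
        ((1 - e / c) * θ t) * (P.card : ℝ) ^ (t + 1) := by
      rw [← hEθ]
      refine h5.trans (le_of_eq ?_)
      rw [pow_succ, hEθ t]; ring
    exact le_of_mul_le_mul_right h6 (pow_pos hN _)
  have hθ3 : ∀ t : ℕ, θ t * (t + 1) ≤ c := by
    intro t
    induction t with
    | zero =>
      have : θ 0 = G x0 := by simp [hθ, hE, runProc]
      simp [this, hGc]
    | succ t ih =>
      have h1 := hθ1 t
      have h0 := hθn t
      set y := θ t with hy
      have ht : (0 : ℝ) ≤ t := Nat.cast_nonneg t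
      -- (y - y²/c)(t+2) ≤ c
      have h2 : (y - y ^ 2 / c) * (t + 2) ≤ c := by
        have hu : y * (t + 1) / c ≤ 1 := by rw [div_le_one hc]; exact ih
        have h3 : (y - y ^ 2 / c) * (t + 2) = c * ((y / c) * (1 - y / c) * (t + 2)) := by
          field_simp
        rw [h3]
        have h4 : (y / c) * (1 - y / c) * (t + 2) ≤ 1 := by
          have hz0 : 0 ≤ y / c := by positivity
          have hz1 : (y / c) * (t + 1) ≤ 1 := by rw [div_mul_eq_mul_div]; exact hu
          set z := y / c
          nlinarith [mul_nonneg hz0 (sub_nonneg.2 hz1)]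
        nlinarith
      push_cast
      nlinarith
  by_cases hxe : D x0 ≤ e
  · have hm : ∀ s t, D (runProc step x0 s t) ≤ e := by
      intro s t
      induction t with
      | zero => exact hxe
      | succ t ih => exact (hDm _ _).trans ih
    simp only [hm, not_true_eq_false, Finset.filter_false, Finset.card_empty, Nat.cast_zero]
    exact mul_nonneg hρ0.le (Nat.cast_nonneg _)
  push Not at hxe
  have hec : e / c ≤ 1 := by
    rw [div_le_one hc]
    have : G x0 = D x0 := by simp [hGdef, hxe.le]
    linarith
  have hlog : 0 < Real.log (1 / ρ) := Real.log_pos (by rw [lt_div_iff₀ hρ0]; linarith)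
  set t1 := ⌈c / e⌉₊ with ht1
  have ht1a : c / e ≤ t1 := Nat.le_ceil _
  have ht1b : (t1 : ℝ) < c / e + 1 := Nat.ceil_lt_add_one (by positivity)
  have hprod : 0 < c / e * Real.log (1 / ρ) := by positivity
  have htT : t1 ≤ T := by
    have : (t1 : ℝ) ≤ T := by nlinarith
    exact_mod_cast this
  obtain ⟨t2, ht2⟩ := Nat.exists_eq_add_of_le htT
  have ht2' : c / e * Real.log (1 / ρ) ≤ t2 := by
    have : (T : ℝ) = t1 + t2 := by exact_mod_cast ht2
    nlinarith
  have hθt1 : θ t1 ≤ e := by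
    have h1 := hθ3 t1
    have h2 := hθn t1
    rw [div_le_iff₀ he] at ht1a
    have h3 : (0 : ℝ) ≤ t1 := Nat.cast_nonneg _
    by_contra h
    push Not at h
    nlinarith
  have hθpow : ∀ k, θ (t1 + k) ≤ (1 - e / c) ^ k * e := by
    intro k
    induction k with
    | zero => simpa using hθt1
    | succ k ih =>
      refine (hθ2 (t1 + k)).trans ?_
      rw [pow_succ]
      have : (1 - e / c) * θ (t1 + k) ≤ (1 - e / c) * ((1 - e / c) ^ k * e) :=
        mul_le_mul_of_nonneg_left ih (by linarith)
      linarith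
  have hρb : (1 - e / c) ^ t2 ≤ ρ := by
    have h1 : (1 - e / c) ≤ Real.exp (-(e / c)) := by
      have := Real.add_one_le_exp (-(e / c)); linarith
    have h2 : (1 - e / c) ^ t2 ≤ Real.exp (-(e / c)) ^ t2 :=
      pow_le_pow_left₀ (by linarith) h1 _
    refine h2.trans ?_
    rw [← Real.exp_nat_mul]
    have h3 : (t2 : ℝ) * -(e / c) ≤ Real.log ρ := by
      have h4 : Real.log (1 / ρ) ≤ t2 * (e / c) := by
        have h5 : Real.log (1 / ρ) = (c / e * Real.log (1 / ρ)) * (e / c) := by field_simp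
        rw [h5]
        exact mul_le_mul_of_nonneg_right ht2' (by positivity)
      rw [one_div, Real.log_inv] at h4
      linarith
    calc Real.exp (t2 * -(e / c)) ≤ Real.exp (Real.log ρ) := Real.exp_le_exp.2 h3
      _ = ρ := Real.exp_log hρ0
  have hθT : θ T ≤ ρ * e := by
    rw [ht2]
    exact (hθpow t2).trans (mul_le_mul_of_nonneg_right hρb he.le)
  have hmarkov : e * (((Fintype.piFinset (fun _ : Fin T => P)).filter
      (fun s => ¬ D (runProc step x0 (extSeq d s) T) ≤ e)).card : ℝ) ≤ E T := by
    simp only [hE]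
    rw [mul_comm, ← nsmul_eq_mul, ← Finset.sum_const]
    refine (Finset.sum_le_sum ?_).trans
      (Finset.sum_le_sum_of_subset_of_nonneg (Finset.filter_subset _ _) (fun _ _ _ => hGn _))
    intro s hs
    have h1 := (Finset.mem_filter.1 hs).2
    push Not at h1
    simp only [hGdef, not_lt.2 h1.le, if_false]
    exact h1.le
  rw [hcard]
  rw [hEθ] at hmarkov
  have h7 : θ T * (P.card : ℝ) ^ T ≤ ρ * e * (P.card : ℝ) ^ T :=
    mul_le_mul_of_nonneg_right hθT (pow_pos hN _).le
  have h8 := hmarkov.trans h7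
  refine le_of_mul_le_mul_left (a := e) ?_ he
  linarith

lemma fExp_hasFDerivAt (m : ℕ) {ι : Type} [Fintype ι] (x : ι → ℝ) :
    HasFDerivAt (fExp m (ι := ι))
      ((1 / (m : ℝ)) • ∑ j, Real.exp (x j) • (ContinuousLinearMap.proj (R := ℝ) (φ := fun _ : ι => ℝ) j)) x := by
  unfold fExp
  apply HasFDerivAt.const_mul
  apply HasFDerivAt.fun_sum
  intro j _
  exact (ContinuousLinearMap.proj (R := ℝ) (φ := fun _ : ι => ℝ) j).hasFDerivAt.exp

lemma gradf_eq (m : ℕ) {ι : Type} [Fintype ι] (x : ι → ℝ) (j : ι) :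
    gradf m x j = (1 / (m : ℝ)) * Real.exp (x j) := by
  unfold gradf
  rw [(fExp_hasFDerivAt m x).fderiv]
  simp [Pi.single_apply]

lemma fExp_nonneg (m : ℕ) {ι : Type} [Fintype ι] (x : ι → ℝ) : 0 ≤ fExp m x := by
  unfold fExp; positivity

lemma gradF_mul {mr : Type} [Fintype mr] {n : ℕ} (m : ℕ) (A : Matrix mr (Fin n) ℝ)
    (lam : Fin n → ℝ) (hpos : 0 < fExp m (A.mulVec lam)) (i : Fin n) :
    A.transpose.mulVec (gradf m (A.mulVec lam)) i =
      fExp m (A.mulVec lam) * gradF m A lam i := by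
  have h1 : HasFDerivAt (fun l : Fin n → ℝ => A.mulVec l)
      (LinearMap.toContinuousLinearMap A.mulVecLin) lam :=
    (LinearMap.toContinuousLinearMap A.mulVecLin).hasFDerivAt
  have h2 := ((fExp_hasFDerivAt m (A.mulVec lam)).comp lam h1).log hpos.ne'
  unfold gradF
  have h3 : fderiv ℝ (FObj m A) lam = _ := h2.fderiv
  rw [h3]
  have h4 : A.transpose.mulVec (gradf m (A.mulVec lam)) i =
      (1 / (m : ℝ)) * ∑ j, Real.exp (A.mulVec lam j) * A j i := by
    rw [Finset.mul_sum]
    refine Finset.sum_congr rfl (fun j _ => ?_)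
    rw [gradf_eq]
    change A j i * _ = _
    ring
  have h5 : ((((1 / (m : ℝ)) • ∑ j, Real.exp (A.mulVec lam j) •
      (ContinuousLinearMap.proj (R := ℝ) (φ := fun _ : mr => ℝ) j)).comp
        (LinearMap.toContinuousLinearMap A.mulVecLin)) (Pi.single i 1)) =
      (1 / (m : ℝ)) * ∑ j, Real.exp (A.mulVec lam j) * A j i := by
    simp
  rw [h4, smul_apply, h5, smul_eq_mul, Function.comp_apply,
    mul_inv_cancel_left₀ hpos.ne']

lemma Lip_pos {mr : Type} [Fintype mr] {n : ℕ} (A : Matrix mr (Fin n) ℝ) (i : Fin n)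
    (h : ∃ j, A j i ≠ 0) : 0 < Lip A i := by
  obtain ⟨j, hj⟩ := h
  have h1 : A j i ^ 2 ≤ Lip A i :=
    le_ciSup (f := fun j => A j i ^ 2) (Set.finite_range _).bddAbove j
  have : 0 < A j i ^ 2 := by positivity
  linarith

lemma D1_nonneg {ι : Type} [Fintype ι] (K : Set (ι → ℝ)) (x : ι → ℝ) : 0 ≤ D1 K x :=
  Real.iInf_nonneg (fun _ => Finset.sum_nonneg (fun _ _ => abs_nonneg _))

lemma D1_of_mem {ι : Type} [Fintype ι] (K : Set (ι → ℝ)) (x : ι → ℝ) (hx : x ∈ K) :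
    D1 K x = 0 := by
  refine le_antisymm ?_ (D1_nonneg K x)
  have hb : BddBelow (Set.range (fun z : K => ∑ j, |x j - (z : ι → ℝ) j|)) :=
    ⟨0, by rintro _ ⟨z, rfl⟩; exact Finset.sum_nonneg (fun _ _ => abs_nonneg _)⟩
  have h1 := ciInf_le hb (Subtype.mk x hx)
  simpa [D1] using h1

lemma gammaT_mul_le {mr : Type} [Fintype mr] {n : ℕ} (A : Matrix mr (Fin n) ℝ)
    (K : Set (mr → ℝ)) (φ : mr → ℝ) (hφ : φ ∈ K) :
    gammaT A K * D1 (K ∩ kerAT A) φ ≤ normLinv A (A.transpose.mulVec φ) := by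
  have hn : 0 ≤ normLinv A (A.transpose.mulVec φ) := Real.sqrt_nonneg _
  by_cases hk : φ ∈ kerAT A
  · rw [D1_of_mem (K ∩ kerAT A) φ ⟨hφ, hk⟩]; simpa using hn
  · rcases (D1_nonneg (K ∩ kerAT A) φ).eq_or_lt with h | h
    · rw [← h]; simpa using hn
    · rw [← le_div_iff₀ h]
      have hb : BddBelow (Set.range (fun φ : {φ : mr → ℝ // φ ∈ K ∧ φ ∉ kerAT A} =>
          normLinv A (A.transpose.mulVec (φ : mr → ℝ)) / D1 (K ∩ kerAT A) (φ : mr → ℝ))) :=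
        ⟨0, by rintro _ ⟨z, rfl⟩; exact div_nonneg (Real.sqrt_nonneg _) (D1_nonneg _ _)⟩
      exact ciInf_le hb (⟨φ, hφ, hk⟩ : {φ : mr → ℝ // φ ∈ K ∧ φ ∉ kerAT A})

/-- One step of Parallel Adaboost. -/
def adaStep {mr : Type} [Fintype mr] {n : ℕ} (m : ℕ) (A : Matrix mr (Fin n) ℝ) (β : ℝ)
    (lt : Fin n → ℝ) (S : Finset (Fin n)) : Fin n → ℝ :=
  if FObj m A (fun i => if i ∈ S then lt i - (1 / (β * Lip A i)) * gradF m A lt i else lt i)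
    ≤ FObj m A lt
  then (fun i => if i ∈ S then lt i - (1 / (β * Lip A i)) * gradF m A lt i else lt i) else lt

lemma iter_eq_run {mr : Type} [Fintype mr] {n : ℕ} (m : ℕ) (A : Matrix mr (Fin n) ℝ) (β : ℝ)
    (lam0 : Fin n → ℝ) (s : ℕ → Finset (Fin n)) (t : ℕ) :
    iter m A β lam0 s t = runProc (adaStep m A β) lam0 s t := by
  induction t with
  | zero => rfl
  | succ t ih =>
    simp only [iter, runProc]
    rw [ih]
    rfl

lemma adaStep_le {mr : Type} [Fintype mr] {n : ℕ} (m : ℕ) (A : Matrix mr (Fin n) ℝ) (β : ℝ)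
    (lt : Fin n → ℝ) (S : Finset (Fin n)) :
    FObj m A (adaStep m A β lt S) ≤ FObj m A lt := by
  unfold adaStep
  split_ifs with h
  · exact h
  · exact le_rfl

lemma adaStep_le' {mr : Type} [Fintype mr] {n : ℕ} (m : ℕ) (A : Matrix mr (Fin n) ℝ) (β : ℝ)
    (lt : Fin n → ℝ) (S : Finset (Fin n)) :
    FObj m A (adaStep m A β lt S) ≤
      FObj m A (lt + restr (fun i => -((1 / (β * Lip A i)) * gradF m A lt i)) S) := by
  have : lt + restr (fun i => -((1 / (β * Lip A i)) * gradF m A lt i)) S =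
    (fun i => if i ∈ S then lt i - (1 / (β * Lip A i)) * gradF m A lt i else lt i) := by
    funext i
    simp only [restr, Pi.add_apply]
    split_ifs <;> ring
  rw [this]
  unfold adaStep
  split_ifs with h
  · exact le_rfl
  · exact (not_le.1 h).le

lemma adaStep_sum {mr : Type} [Fintype mr] {n : ℕ} (m : ℕ) (A : Matrix mr (Fin n) ℝ) (β : ℝ)
    (hβ : 0 < β) (τ : ℕ) (hτn : τ ≤ n) (hL : ∀ i, 0 < Lip A i) (hESO : ESO m A τ β)
    (lt : Fin n → ℝ) :
    ∑ S ∈ Finset.powersetCard τ (Finset.univ : Finset (Fin n)), FObj m A (adaStep m A β lt S) ≤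
      ((Finset.powersetCard τ (Finset.univ : Finset (Fin n))).card : ℝ) *
        (FObj m A lt - (τ : ℝ) / n * (1 / (2 * β)) * normLinv A (gradF m A lt) ^ 2) := by
  have hc : (0 : ℝ) < ((Finset.powersetCard τ (Finset.univ : Finset (Fin n))).card : ℝ) := by
    rw [Finset.card_powersetCard]
    simpa using Nat.choose_pos hτn
  have h1 := hESO lt (fun i => -((1 / (β * Lip A i)) * gradF m A lt i))
  unfold niceExp at h1
  rw [div_le_iff₀ hc] at h1
  refine (Finset.sum_le_sum (fun S _ => adaStep_le' m A β lt S)).trans (h1.trans (le_of_eq ?_))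
  rw [mul_comm]
  congr 1
  have h2 : normLinv A (gradF m A lt) ^ 2 = ∑ i, gradF m A lt i ^ 2 / Lip A i := by
    unfold normLinv
    exact Real.sq_sqrt (Finset.sum_nonneg (fun i _ => div_nonneg (sq_nonneg _) (hL i).le))
  rw [h2]
  have h3 : (∑ i, gradF m A lt i * -((1 / (β * Lip A i)) * gradF m A lt i)) +
      (β / 2) * ∑ i, Lip A i * (-((1 / (β * Lip A i)) * gradF m A lt i)) ^ 2 =
      -((1 / (2 * β)) * ∑ i, gradF m A lt i ^ 2 / Lip A i) := by
    rw [Finset.mul_sum, Finset.mul_sum, ← Finset.sum_add_distrib, ← Finset.sum_neg_distrib]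
    refine Finset.sum_congr rfl (fun i _ => ?_)
    have := hL i
    field_simp
    ring
  rw [h3]
  ring

/-- main iteration-complexity theorem in the general case
`1 ≤ |H(A)| ≤ m − 1`.  The rows of `A` are split as `A = [A₀; A₊]` where the
rows of `A₊` (indexed by `Sum.inr`) form the hard core.  Probabilities over the
i.i.d. `τ`-nice samplings `(S_0,…,S_{T−1})` are expressed by counting the
sequences of `τ`-subsets. -/
theorem stmt11 {m₀ mp n : ℕ} (hn : 1 ≤ n) (hm₀ : 1 ≤ m₀) (hmp : 1 ≤ mp)
    (m : ℕ) (hmeq : m = m₀ + mp)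
    (A₀ : Matrix (Fin m₀) (Fin n) ℝ) (Ap : Matrix (Fin mp) (Fin n) ℝ)
    (A : Matrix (Fin m₀ ⊕ Fin mp) (Fin n) ℝ) (hA : A = Matrix.fromRows A₀ Ap)
    (hAcol : ∀ i : Fin n, ∃ j, A j i ≠ 0)
    (hH : hardCore A = Set.range Sum.inr)
    (τ : ℕ) (hτ1 : 1 ≤ τ) (hτn : τ ≤ n)
    (lam0 : Fin n → ℝ)
    (Cplus : Set (Fin mp → ℝ)) (a b : Fin mp → ℝ) (hrect : Cplus = Set.Icc a b)
    (hCcont : {x : Fin mp → ℝ | (∃ μ : Fin n → ℝ, x = Ap.mulVec μ) ∧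
        fExp m x ≤ fExp m (A.mulVec lam0)} ⊆ Cplus)
    (K : Set (Fin m₀ ⊕ Fin mp → ℝ))
    (hK : K = {φ | (∀ j₀ : Fin m₀, 0 ≤ φ (Sum.inl j₀)) ∧
        (fun jp : Fin mp => φ (Sum.inr jp)) ∈ (fun z : Fin mp → ℝ => gradf m z) '' Cplus})
    (fbar : ℝ) (hfbar : fbar = ⨅ lam : Fin n → ℝ, fExp m (A.mulVec lam))
    (hfbarpos : 0 < fbar)
    (hfbarplus : (⨅ μ : Fin n → ℝ, fExp m (Ap.mulVec μ)) = fbar)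
    (γ : ℝ) (hγ : γ = gammaT A K) (hγpos : 0 < γ)
    (ct wt : ℝ) (hct : 0 < ct) (hwt : 0 ≤ wt)
    (hbound : ∀ lam : Fin n → ℝ, fExp m (A.mulVec lam) ≤ fExp m (A.mulVec lam0) →
      FObj m A lam - Real.log fbar ≤
        (1 + 2 * wt / ct) / fExp m (Ap.mulVec lam) *
          D1 (K ∩ kerAT A) (gradf m (A.mulVec lam)))
    (β : ℝ) (hβ : 0 < β) (hESO : ESO m A τ β)
    (ε : ℝ) (hε0 : 0 < ε) (hε2 : ε < 2 * fbar)
    (ρ : ℝ) (hρ0 : 0 < ρ) (hρ1 : ρ < 1)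
    (T : ℕ)
    (hT : (T : ℝ) ≥ (4 * β * (n : ℝ) / (τ : ℝ)) * ((1 + 2 * wt / ct) ^ 2 / γ ^ 2) *
        (fExp m (A.mulVec lam0) ^ 2 / fbar) * (1 / ε) * (1 + Real.log (1 / ρ)) + 2) :
    ((Finset.univ.filter (fun s : Fin T → Finset (Fin n) =>
        (∀ t, (s t).card = τ) ∧
        fExp m (A.mulVec (iter m A β lam0
          (fun t => if h : t < T then s ⟨t, h⟩ else ∅) T)) - fbar ≤ ε)).card : ℝ) ≥
      (1 - ρ) * ((Finset.univ.filter (fun s : Fin T → Finset (Fin n) =>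
        ∀ t, (s t).card = τ)).card : ℝ) := by
  set B := fExp m (A.mulVec lam0) with hB
  have hm : (0 : ℝ) < m := by
    have : 0 < m := by omega
    exact_mod_cast this
  have hL : ∀ i, 0 < Lip A i := fun i => Lip_pos A i (hAcol i)
  have hfb : ∀ lam, fbar ≤ fExp m (A.mulVec lam) := by
    intro lam
    rw [hfbar]
    exact ciInf_le ⟨0, by rintro _ ⟨z, rfl⟩; exact fExp_nonneg _ _⟩ lam
  have hfbp : ∀ lam, fbar ≤ fExp m (Ap.mulVec lam) := by
    intro lam
    rw [← hfbarplus]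
    exact ciInf_le ⟨0, by rintro _ ⟨z, rfl⟩; exact fExp_nonneg _ _⟩ lam
  have hfpos : ∀ lam, 0 < fExp m (A.mulVec lam) := fun lam => hfbarpos.trans_le (hfb lam)
  have hBpos : 0 < B := hfpos lam0
  have hinr : ∀ lam j, A.mulVec lam (Sum.inr j) = Ap.mulVec lam j := by
    intro lam j; rw [hA, Matrix.fromRows_mulVec]; rfl
  have hple : ∀ lam, fExp m (Ap.mulVec lam) ≤ fExp m (A.mulVec lam) := by
    intro lam
    unfold fExp
    refine mul_le_mul_of_nonneg_left ?_ (by positivity)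
    rw [Fintype.sum_sum_type]
    simp only [hinr]
    have : 0 ≤ ∑ j : Fin m₀, Real.exp (A.mulVec lam (Sum.inl j)) :=
      Finset.sum_nonneg (fun _ _ => (Real.exp_pos _).le)
    linarith
  have hmemK : ∀ lam, fExp m (A.mulVec lam) ≤ B → gradf m (A.mulVec lam) ∈ K := by
    intro lam h
    rw [hK]
    refine ⟨fun j => ?_, Ap.mulVec lam, hCcont ⟨⟨lam, rfl⟩, (hple lam).trans h⟩, ?_⟩
    · rw [gradf_eq]; positivity
    · funext j
      simp only [gradf_eq, hinr]
  set κ := 1 + 2 * wt / ct with hκ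
  have hκpos : 0 < κ := by positivity
  have hnpos : (0 : ℝ) < n := by exact_mod_cast hn
  have hτpos : (0 : ℝ) < τ := by exact_mod_cast hτ1
  have hD0 : ∀ lam, 0 ≤ FObj m A lam - Real.log fbar := by
    intro lam
    have : Real.log fbar ≤ FObj m A lam := Real.log_le_log hfbarpos (hfb lam)
    linarith
  have hgr : ∀ lam, fExp m (A.mulVec lam) ≤ B →
      FObj m A lam - Real.log fbar ≤ κ * B / (fbar * γ) * normLinv A (gradF m A lam) := by
    intro lam h
    have h1 := hbound lam h
    have h2 := gammaT_mul_le A K _ (hmemK lam h)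
    rw [← hγ] at h2
    have h3 : normLinv A (A.transpose.mulVec (gradf m (A.mulVec lam))) =
        fExp m (A.mulVec lam) * normLinv A (gradF m A lam) := by
      unfold normLinv
      simp only [gradF_mul m A lam (hfpos lam)]
      rw [← Real.sqrt_sq (hfpos lam).le, ← Real.sqrt_mul (sq_nonneg _), Real.sqrt_sq (hfpos lam).le,
        Finset.mul_sum]
      congr 1
      refine Finset.sum_congr rfl (fun i _ => ?_)
      ring
    rw [h3] at h2
    have hg0 : 0 ≤ normLinv A (gradF m A lam) := Real.sqrt_nonneg _
    have hd0 := D1_nonneg (K ∩ kerAT A) (gradf m (A.mulVec lam))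
    set d := D1 (K ∩ kerAT A) (gradf m (A.mulVec lam))
    set g := normLinv A (gradF m A lam)
    have h4 : d ≤ B * g / γ := by
      rw [le_div_iff₀ hγpos]
      have : fExp m (A.mulVec lam) * g ≤ B * g := mul_le_mul_of_nonneg_right h hg0
      linarith
    calc FObj m A lam - Real.log fbar ≤ κ / fExp m (Ap.mulVec lam) * d := h1
      _ ≤ κ / fbar * d := by
        refine mul_le_mul_of_nonneg_right ?_ hd0
        exact div_le_div_of_nonneg_left hκpos.le hfbarpos (hfbp lam)
      _ ≤ κ / fbar * (B * g / γ) := mul_le_mul_of_nonneg_left h4 (by positivity)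
      _ = κ * B / (fbar * γ) * g := by field_simp
  set c : ℝ := 2 * n * β * κ ^ 2 * B ^ 2 / (τ * γ ^ 2 * fbar ^ 2) with hc
  have hcpos : 0 < c := by positivity
  set P := Finset.powersetCard τ (Finset.univ : Finset (Fin n)) with hP
  have hPc : 0 < P.card := by
    rw [hP, Finset.card_powersetCard]
    simpa using Nat.choose_pos hτn
  have key := process_bound (adaStep m A β) lam0 (∅ : Finset (Fin n)) P hPc
    (fun lam => fExp m (A.mulVec lam) ≤ B) (fun lam => FObj m A lam - Real.log fbar) c hcpos
    le_rfl
    (by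
      intro x w hx
      have h1 := adaStep_le m A β x w
      exact ((Real.log_le_log_iff (hfpos _) (hfpos _)).1 h1).trans hx)
    hD0
    (by
      intro x w
      have h1 := adaStep_le m A β x w
      simpa using h1)
    (by
      intro x hx
      have h1 := adaStep_sum m A β hβ τ hτn hL hESO x
      have h2 := hgr x hx
      have h3 := hD0 x
      have h4 : (FObj m A x - Real.log fbar) ^ 2 / c ≤
          (τ : ℝ) / n * (1 / (2 * β)) * normLinv A (gradF m A x) ^ 2 := by
        rw [div_le_iff₀ hcpos]
        calc (FObj m A x - Real.log fbar) ^ 2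
            ≤ (κ * B / (fbar * γ) * normLinv A (gradF m A x)) ^ 2 := pow_le_pow_left₀ h3 h2 2
          _ = _ := by rw [hc]; field_simp
      rw [Finset.sum_sub_distrib, Finset.sum_const, nsmul_eq_mul]
      have h5 := mul_le_mul_of_nonneg_left h4 (Nat.cast_nonneg (α := ℝ) P.card)
      rw [mul_sub] at h1
      rw [mul_sub, mul_sub]
      linarith)
    (ε / (2 * fbar)) (by positivity) ρ hρ0 hρ1 T
    (by
      refine le_trans (le_of_eq ?_) hT
      rw [hc]
      field_simp
      ring)
  have hset : (Finset.univ.filter (fun s : Fin T → Finset (Fin n) => ∀ t, (s t).card = τ)) =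
      Fintype.piFinset (fun _ : Fin T => P) := by
    ext s
    simp [hP, Finset.mem_powersetCard]
  rw [hset]
  have hsplit := Finset.card_filter_add_card_filter_not (s := Fintype.piFinset (fun _ : Fin T => P))
    (fun s => FObj m A (runProc (adaStep m A β) lam0 (extSeq ∅ s) T) - Real.log fbar
      ≤ ε / (2 * fbar))
  have hsub : (Fintype.piFinset (fun _ : Fin T => P)).filter
      (fun s => FObj m A (runProc (adaStep m A β) lam0 (extSeq ∅ s) T) - Real.log fbar
        ≤ ε / (2 * fbar)) ⊆
      (Finset.univ.filter (fun s : Fin T → Finset (Fin n) =>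
        (∀ t, (s t).card = τ) ∧
        fExp m (A.mulVec (iter m A β lam0
          (fun t => if h : t < T then s ⟨t, h⟩ else ∅) T)) - fbar ≤ ε)) := by
    intro s hs
    rw [Finset.mem_filter, ← hset, Finset.mem_filter] at hs
    refine Finset.mem_filter.2 ⟨Finset.mem_univ _, hs.1.2, ?_⟩
    rw [iter_eq_run]
    have h2 := hs.2
    change _ ≤ _ at h2
    change fExp m (A.mulVec (runProc (adaStep m A β) lam0 (extSeq ∅ s) T)) - fbar ≤ ε
    set lam := runProc (adaStep m A β) lam0 (extSeq ∅ s) T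
    set e := ε / (2 * fbar) with he
    have he0 : 0 < e := by positivity
    have he1 : e < 1 := by rw [he, div_lt_one (by positivity)]; exact hε2
    have hεe : ε = 2 * fbar * e := by rw [he]; field_simp
    have h3 : fExp m (A.mulVec lam) ≤ fbar * Real.exp e := by
      have h4 : Real.log (fExp m (A.mulVec lam)) ≤ Real.log fbar + e := by
        unfold FObj at h2; linarith
      calc fExp m (A.mulVec lam) = Real.exp (Real.log (fExp m (A.mulVec lam))) :=
            (Real.exp_log (hfpos _)).symm
        _ ≤ Real.exp (Real.log fbar + e) := Real.exp_le_exp.2 h4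
        _ = fbar * Real.exp e := by rw [Real.exp_add, Real.exp_log hfbarpos]
    have h5 : Real.exp e ≤ 1 + 2 * e := by
      have h6 := Real.abs_exp_sub_one_sub_id_le (x := e) (by rw [abs_of_pos he0]; exact he1.le)
      have h7 := (abs_le.1 h6).2
      nlinarith
    rw [hεe]
    nlinarith [mul_le_mul_of_nonneg_left h5 hfbarpos.le]
  have hcle := Nat.cast_le (α := ℝ).2 (Finset.card_le_card hsub)
  refine ge_iff_le.2 (le_trans ?_ hcle)
  have hs' : (((Fintype.piFinset (fun _ : Fin T => P)).filter
      (fun s => FObj m A (runProc (adaStep m A β) lam0 (extSeq ∅ s) T) - Real.log fbar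
        ≤ ε / (2 * fbar))).card : ℝ) + (((Fintype.piFinset (fun _ : Fin T => P)).filter
      (fun s => ¬ FObj m A (runProc (adaStep m A β) lam0 (extSeq ∅ s) T) - Real.log fbar
        ≤ ε / (2 * fbar))).card : ℝ) = ((Fintype.piFinset (fun _ : Fin T => P)).card : ℝ) := by
    exact_mod_cast hsplit
  linarith

end
end

section
/- Suppose |H(A)| = m (attainability). Fix λ⁰ ∈ ℝ^n, let C ⊆ ℝ^m be a compact axis-aligned rectangle containing { x ∈ Im(A) : f(x) ≤ f(Aλ⁰) }, and assume: (i) f̄_A > 0; (ii) γ̃ := γ̃(A, ∇f(C)) > 0; (iii) c̃ > 0 is a constant such that for every λ with f(Aλ) ≤ f(Aλ⁰), F(λ) − log f̄_A ≤ (2/c̃) · (1/f(Aλ)²) · D¹_{∇f(C) ∩ Ker(Aᵀ)}(∇f(Aλ))²; and (iv) β > 0 satisfies the ESO. Let (λ^t)_{t≥0} be the Parallel Adaboost iterates started at λ⁰. Then for every 0 < ε < 2f̄_A, every ρ ∈ (0,1), and every integer T ≥ (β/τ) · (4n/(c̃·γ̃²)) · log( 2(f(Aλ⁰) − f̄_A)/(ε·ρ)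 ), one has P( f(Aλ^T) − f̄_A ≤ ε ) ≥ 1 − ρ. -/
open Finset
open scoped BigOperators Classical

noncomputable section

lemma aux_iter_shift {m n : ℕ} (A : Matrix (Fin m) (Fin n) ℝ) (β : ℝ)
    (lam : Fin n → ℝ) (s : ℕ → Finset (Fin n)) (t : ℕ) :
    iter m A β lam s (t + 1) =
      iter m A β (iter m A β lam s 1) (fun k => s (k + 1)) t := by
  induction t with
  | zero => rfl
  | succ t ih =>
    rw [iter, ih]
    conv_rhs => rw [iter]

lemma aux_count {α X : Type} [Fintype α] (p : α → Prop) [DecidablePred p] (d : α)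
    (it : X → (ℕ → α) → ℕ → X) (step : X → α → X)
    (h0 : ∀ x s, it x s 0 = x)
    (h1 : ∀ x s t, it x s (t + 1) = it (step x (s 0)) (fun k => s (k + 1)) t)
    (Inv : X → Prop) (hInv : ∀ x a, Inv x → Inv (step x a))
    (ξ : X → ℝ) (q : ℝ) (hq : 0 ≤ q)
    (hstep : ∀ x, Inv x → ∑ a ∈ univ.filter p, ξ (step x a) ≤ q * ξ x) (T : ℕ) :
    ∀ x, Inv x → ∑ s ∈ univ.filter (fun s : Fin T → α => ∀ t, p (s t)),
      ξ (it x (fun t => if h : t < T then s ⟨t, h⟩ else d) T) ≤ q ^ T * ξ x := by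
  induction T with
  | zero => intro x _; simp [h0]
  | succ T ih =>
    intro x hx
    have key : ∑ s ∈ univ.filter (fun s : Fin (T+1) → α => ∀ t, p (s t)),
        ξ (it x (fun t => if h : t < T + 1 then s ⟨t, h⟩ else d) (T+1)) =
        ∑ a ∈ univ.filter p, ∑ s ∈ univ.filter (fun s : Fin T → α => ∀ t, p (s t)),
          ξ (it (step x a) (fun t => if h : t < T then s ⟨t, h⟩ else d) T) := by
      simp only [Finset.sum_filter]
      rw [← (Fin.consEquiv (fun _ : Fin (T+1) => α)).sum_comp, Fintype.sum_prod_type]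
      refine Finset.sum_congr rfl fun a _ => ?_
      by_cases ha : p a
      · rw [if_pos ha]
        refine Finset.sum_congr rfl fun s _ => ?_
        have e : it x (fun t => if h : t < T + 1 then
            (Fin.consEquiv (fun _ : Fin (T+1) => α)) (a, s) ⟨t, h⟩ else d) (T+1) =
            it (step x a) (fun t => if h : t < T then s ⟨t, h⟩ else d) T := by
          rw [h1]
          congr 1
          funext k
          by_cases hk : k < T
          · have hk' : k + 1 < T + 1 := by omega
            simp only [hk, hk', dif_pos]
            exact Fin.cons_succ (α := fun _ => α) a s ⟨k, hk⟩
          · have hk' : ¬ k + 1 < T + 1 := by omega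
            simp only [hk, hk', dif_neg, not_false_eq_true]
        rw [e]
        simp [Fin.forall_fin_succ, ha, Fin.consEquiv]
      · simp [Fin.forall_fin_succ, ha, Fin.consEquiv]
    rw [key]
    calc _ ≤ ∑ a ∈ univ.filter p, q ^ T * ξ (step x a) :=
          Finset.sum_le_sum fun a _ => ih _ (hInv x a hx)
      _ = q ^ T * ∑ a ∈ univ.filter p, ξ (step x a) := by rw [Finset.mul_sum]
      _ ≤ q ^ T * (q * ξ x) := mul_le_mul_of_nonneg_left (hstep x hx) (pow_nonneg hq T)
      _ = _ := by ring

lemma aux_fpos {m : ℕ} (hm : 1 ≤ m) (x : Fin m → ℝ) : 0 < fExp m x := by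
  unfold fExp
  have : Nonempty (Fin m) := ⟨⟨0, hm⟩⟩
  have : (0:ℝ) < m := by exact_mod_cast hm
  have : 0 < ∑ j, Real.exp (x j) :=
    Finset.sum_pos (fun j _ => Real.exp_pos _) Finset.univ_nonempty
  positivity

lemma aux_diff {m : ℕ} : Differentiable ℝ (fExp m (ι := Fin m)) := by
  unfold fExp
  fun_prop

lemma aux_gradF {m n : ℕ} (hm : 1 ≤ m) (A : Matrix (Fin m) (Fin n) ℝ) (lam : Fin n → ℝ)
    (i : Fin n) : gradF m A lam i =
      (A.transpose.mulVec (gradf m (A.mulVec lam))) i / fExp m (A.mulVec lam) := by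
  have hl : HasFDerivAt (fun l : Fin n → ℝ => A.mulVec l)
      (LinearMap.toContinuousLinearMap A.mulVecLin) lam :=
    (LinearMap.toContinuousLinearMap A.mulVecLin).hasFDerivAt
  have hf := (aux_diff (m := m) (A.mulVec lam)).hasFDerivAt
  have hc := (hf.comp lam hl).log (aux_fpos hm _).ne'
  have hF : HasFDerivAt (FObj m A) _ lam := hc
  unfold gradF
  rw [hF.fderiv]
  have hs := LinearMap.pi_apply_eq_sum_univ
    (fderiv ℝ (fExp m (ι := Fin m)) (A.mulVec lam)).toLinearMap (A.mulVec (Pi.single i 1))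
  simp only [ContinuousLinearMap.coe_coe] at hs
  have : A.transpose.mulVec (gradf m (A.mulVec lam)) i =
      fderiv ℝ (fExp m (ι := Fin m)) (A.mulVec lam) (A.mulVec (Pi.single i 1)) := by
    rw [hs]
    simp only [Matrix.mulVec, dotProduct, Matrix.transpose_apply, gradf]
    refine Finset.sum_congr rfl fun j _ => ?_
    have e : (fun k => if j = k then (1:ℝ) else 0) = Pi.single j 1 := by
      funext k; simp [Pi.single_apply, eq_comm]
    simp [e, Pi.single_apply]
    exact Or.inl (by congr!)
  rw [this]
  simp [div_eq_inv_mul]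

lemma aux_Lip {m n : ℕ} (A : Matrix (Fin m) (Fin n) ℝ)
    (hAcol : ∀ i : Fin n, ∃ j : Fin m, A j i ≠ 0) (i : Fin n) : 0 < Lip A i := by
  obtain ⟨j, hj⟩ := hAcol i
  have h1 : 0 < A j i ^ 2 := by positivity
  exact h1.trans_le (le_ciSup (f := fun j => A j i ^ 2) (Set.finite_range _).bddAbove j)

lemma aux_D1_nonneg {m : ℕ} (K : Set (Fin m → ℝ)) (x : Fin m → ℝ) : 0 ≤ D1 K x :=
  Real.iInf_nonneg fun _ => Finset.sum_nonneg fun _ _ => abs_nonneg _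

lemma aux_gamma {m n : ℕ} (A : Matrix (Fin m) (Fin n) ℝ) (K : Set (Fin m → ℝ))
    (φ : Fin m → ℝ) (hφ : φ ∈ K) :
    gammaT A K * D1 (K ∩ kerAT A) φ ≤ normLinv A (A.transpose.mulVec φ) := by
  have hn : 0 ≤ normLinv A (A.transpose.mulVec φ) := Real.sqrt_nonneg _
  rcases (aux_D1_nonneg (K ∩ kerAT A) φ).eq_or_lt with h | h
  · rw [← h]; simpa using hn
  · have hk : φ ∉ kerAT A := by
      intro hk
      have : D1 (K ∩ kerAT A) φ ≤ ∑ j, |φ j - φ j| :=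
        ciInf_le (f := fun z : ↑(K ∩ kerAT A) => ∑ j, |φ j - (z : Fin m → ℝ) j|)
          ⟨0, by rintro _ ⟨z, rfl⟩; exact Finset.sum_nonneg fun _ _ => abs_nonneg _⟩
          ⟨φ, hφ, hk⟩
      simp at this
      linarith
    rw [← le_div_iff₀ h]
    exact ciInf_le (f := fun φ : {φ : Fin m → ℝ // φ ∈ K ∧ φ ∉ kerAT A} =>
      normLinv A (A.transpose.mulVec (φ : Fin m → ℝ)) / D1 (K ∩ kerAT A) (φ : Fin m → ℝ))
      ⟨0, by rintro _ ⟨z, rfl⟩; exact div_nonneg (Real.sqrt_nonneg _) (aux_D1_nonneg _ _)⟩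
      ⟨φ, hφ, hk⟩

lemma aux_step_eq {m n : ℕ} (A : Matrix (Fin m) (Fin n) ℝ) (β : ℝ)
    (lam : Fin n → ℝ) (s : ℕ → Finset (Fin n)) :
    iter m A β lam s 1 = iter m A β lam (fun _ => s 0) 1 := rfl

lemma aux_step_le {m n : ℕ} (A : Matrix (Fin m) (Fin n) ℝ) (β : ℝ)
    (lam : Fin n → ℝ) (s : ℕ → Finset (Fin n)) :
    FObj m A (iter m A β lam s 1) ≤ FObj m A lam ∧
    FObj m A (iter m A β lam s 1) ≤
      FObj m A (lam + restr (fun i => - (1 / (β * Lip A i)) * gradF m A lam i) (s 0)) := by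
  have e : (lam + restr (fun i => - (1 / (β * Lip A i)) * gradF m A lam i) (s 0)) =
    (fun i => if i ∈ s 0 then lam i - (1 / (β * Lip A i)) * gradF m A lam i else lam i) := by
    funext i
    by_cases h : i ∈ s 0 <;> simp [restr, h] <;> ring
  rw [e]
  set l' : Fin n → ℝ :=
    (fun i => if i ∈ s 0 then lam i - (1 / (β * Lip A i)) * gradF m A lam i else lam i)
  have hi : iter m A β lam s 1 = if FObj m A l' ≤ FObj m A lam then l' else lam := by
    simp only [iter, l']
    congr!
  by_cases h : FObj m A l' ≤ FObj m A lam
  · rw [if_pos h] at hi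
    rw [hi]
    exact ⟨h, le_rfl⟩
  · rw [if_neg h] at hi
    rw [hi]
    exact ⟨le_rfl, (not_le.mp h).le⟩

/-- One-step expected decrease from the separable overapproximation. -/
lemma aux_descent {m n : ℕ} (hm : 1 ≤ m) (A : Matrix (Fin m) (Fin n) ℝ)
    (hAcol : ∀ i : Fin n, ∃ j : Fin m, A j i ≠ 0) (τ : ℕ) (hτn : τ ≤ n)
    (β : ℝ) (hβ : 0 < β) (hESO : ESO m A τ β) (lam : Fin n → ℝ) :
    ∑ S ∈ univ.filter (fun S : Finset (Fin n) => S.card = τ),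
      FObj m A (iter m A β lam (fun _ => S) 1) ≤
    ((univ.filter (fun S : Finset (Fin n) => S.card = τ)).card : ℝ) *
      (FObj m A lam - (τ / n : ℝ) * (1 / (2 * β)) *
        ((normLinv A (A.transpose.mulVec (gradf m (A.mulVec lam)))) ^ 2
          / fExp m (A.mulVec lam) ^ 2)) := by
  have hP : (univ.filter (fun S : Finset (Fin n) => S.card = τ)) =
      Finset.powersetCard τ (Finset.univ : Finset (Fin n)) := by
    ext S; simp [Finset.mem_powersetCard]
  have hN : (0:ℝ) < ((Finset.powersetCard τ (Finset.univ : Finset (Fin n))).card : ℝ) := by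
    rw [Finset.card_powersetCard]
    simpa using Nat.choose_pos hτn
  have h := hESO lam (fun i => - (1 / (β * Lip A i)) * gradF m A lam i)
  unfold niceExp at h
  rw [div_le_iff₀ hN] at h
  rw [hP]
  refine (Finset.sum_le_sum fun S _ => (aux_step_le A β lam (fun _ => S)).2).trans
    (h.trans (le_of_eq ?_))
  rw [mul_comm]
  congr 1
  rw [normLinv, Real.sq_sqrt (Finset.sum_nonneg fun i _ =>
    div_nonneg (sq_nonneg _) (aux_Lip A hAcol i).le)]
  have hf := (aux_fpos hm (A.mulVec lam)).ne'
  rw [sub_eq_add_neg, mul_assoc, ← mul_neg]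
  congr 2
  rw [Finset.mul_sum, ← Finset.sum_add_distrib, Finset.sum_div, Finset.mul_sum,
    ← Finset.sum_neg_distrib]
  refine Finset.sum_congr rfl fun i _ => ?_
  have hL := (aux_Lip A hAcol i).ne'
  rw [aux_gradF hm]
  field_simp
  ring

/-- iteration complexity under attainability (`|H(A)| = m`).
Probabilities over the i.i.d. `τ`-nice samplings are expressed by counting the
sequences of `τ`-subsets. -/
theorem stmt13 {m n : ℕ} (hm : 1 ≤ m) (hn : 1 ≤ n) (A : Matrix (Fin m) (Fin n) ℝ)
    (hAcol : ∀ i : Fin n, ∃ j : Fin m, A j i ≠ 0)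
    (hH : hardCore A = Set.univ)
    (τ : ℕ) (hτ1 : 1 ≤ τ) (hτn : τ ≤ n)
    (lam0 : Fin n → ℝ)
    (C : Set (Fin m → ℝ)) (a b : Fin m → ℝ) (hrect : C = Set.Icc a b)
    (hCcont : {x : Fin m → ℝ | (∃ μ : Fin n → ℝ, x = A.mulVec μ) ∧
        fExp m x ≤ fExp m (A.mulVec lam0)} ⊆ C)
    (fbar : ℝ) (hfbar : fbar = ⨅ lam : Fin n → ℝ, fExp m (A.mulVec lam))
    (hfbarpos : 0 < fbar)
    (γ : ℝ) (hγ : γ = gammaT A ((fun z : Fin m → ℝ => gradf m z) '' C)) (hγpos : 0 < γ)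
    (ct : ℝ) (hct : 0 < ct)
    (hbound : ∀ lam : Fin n → ℝ, fExp m (A.mulVec lam) ≤ fExp m (A.mulVec lam0) →
      FObj m A lam - Real.log fbar ≤
        (2 / ct) * (1 / fExp m (A.mulVec lam) ^ 2) *
          D1 (((fun z : Fin m → ℝ => gradf m z) '' C) ∩ kerAT A)
            (gradf m (A.mulVec lam)) ^ 2)
    (β : ℝ) (hβ : 0 < β) (hESO : ESO m A τ β)
    (ε : ℝ) (hε0 : 0 < ε) (hε2 : ε < 2 * fbar)
    (ρ : ℝ) (hρ0 : 0 < ρ) (hρ1 : ρ < 1)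
    (T : ℕ)
    (hT : (T : ℝ) ≥ (β / (τ : ℝ)) * (4 * (n : ℝ) / (ct * γ ^ 2)) *
        Real.log (2 * (fExp m (A.mulVec lam0) - fbar) / (ε * ρ))) :
    ((Finset.univ.filter (fun s : Fin T → Finset (Fin n) =>
        (∀ t, (s t).card = τ) ∧
        fExp m (A.mulVec (iter m A β lam0
          (fun t => if h : t < T then s ⟨t, h⟩ else ∅) T)) - fbar ≤ ε)).card : ℝ) ≥
      (1 - ρ) * ((Finset.univ.filter (fun s : Fin T → Finset (Fin n) =>
        ∀ t, (s t).card = τ)).card : ℝ) := by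
  have hfp := aux_fpos hm
  have hbdd : BddBelow (Set.range fun lam : Fin n → ℝ => fExp m (A.mulVec lam)) :=
    ⟨0, by rintro _ ⟨l, rfl⟩; exact (hfp _).le⟩
  have hfb : ∀ lam : Fin n → ℝ, fbar ≤ fExp m (A.mulVec lam) := fun lam => by
    rw [hfbar]; exact ciInf_le hbdd lam
  have hτ : (0:ℝ) < τ := by exact_mod_cast hτ1
  have hn' : (0:ℝ) < n := by exact_mod_cast hn
  set κ : ℝ := τ * ct * γ ^ 2 / (4 * β * n) with hκ
  have hκpos : 0 < κ := by positivity
  set P := univ.filter (fun S : Finset (Fin n) => S.card = τ) with hPdef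
  set N : ℝ := (P.card : ℝ) with hNdef
  have hN0 : 0 ≤ N := by positivity
  let ξ : (Fin n → ℝ) → ℝ := fun l => FObj m A l - Real.log fbar
  have hξ0 : ∀ l, 0 ≤ ξ l := fun l => sub_nonneg.mpr (Real.log_le_log hfbarpos (hfb l))
  have hFf : ∀ l l' : Fin n → ℝ, FObj m A l ≤ FObj m A l' →
      fExp m (A.mulVec l) ≤ fExp m (A.mulVec l') := fun l l' h =>
    (Real.log_le_log_iff (hfp _) (hfp _)).mp h
  have hstep : ∀ l, fExp m (A.mulVec l) ≤ fExp m (A.mulVec lam0) →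
      ∑ S ∈ P, ξ (iter m A β l (fun _ => S) 1) ≤ (N * Real.exp (-κ)) * ξ l := by
    intro l hl
    have hd := aux_descent hm A hAcol τ hτn β hβ hESO l
    have hb := hbound l hl
    have hg := aux_gamma A ((fun z : Fin m → ℝ => gradf m z) '' C) (gradf m (A.mulVec l))
      ⟨_, hCcont ⟨⟨l, rfl⟩, hl⟩, rfl⟩
    rw [← hγ] at hg
    set D := D1 (((fun z : Fin m → ℝ => gradf m z) '' C) ∩ kerAT A) (gradf m (A.mulVec l))
    set G := normLinv A (A.transpose.mulVec (gradf m (A.mulVec l)))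
    have hD : 0 ≤ D := aux_D1_nonneg _ _
    have hf := hfp (A.mulVec l)
    set f := fExp m (A.mulVec l)
    have hG : (γ * D) ^ 2 ≤ G ^ 2 := pow_le_pow_left₀ (by positivity) hg 2
    have hmain : κ * ξ l ≤ (τ / n : ℝ) * (1 / (2 * β)) * (G ^ 2 / f ^ 2) := by
      calc κ * ξ l ≤ κ * ((2 / ct) * (1 / f ^ 2) * D ^ 2) :=
            mul_le_mul_of_nonneg_left hb hκpos.le
        _ = (τ / n : ℝ) * (1 / (2 * β)) * ((γ * D) ^ 2 / f ^ 2) := by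
            rw [hκ]; field_simp; ring
        _ ≤ _ := by gcongr
    have hexp : 1 - κ ≤ Real.exp (-κ) := by linarith [Real.add_one_le_exp (-κ)]
    simp only [ξ, Finset.sum_sub_distrib, Finset.sum_const, nsmul_eq_mul]
    have h2 : ξ l - κ * ξ l ≤ Real.exp (-κ) * ξ l := by nlinarith [hξ0 l]
    have h3 := mul_le_mul_of_nonneg_left h2 hN0
    have h4 := mul_le_mul_of_nonneg_left hmain hN0
    simp only [ξ] at h3 h4
    linarith
  have hcount := aux_count (fun S : Finset (Fin n) => S.card = τ) ∅
    (iter m A β) (fun l S => iter m A β l (fun _ => S) 1) (fun _ _ => rfl)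
    (fun x s t => by rw [aux_iter_shift, aux_step_eq])
    (fun l => fExp m (A.mulVec l) ≤ fExp m (A.mulVec lam0))
    (fun x a hx => (hFf _ _ (aux_step_le A β x _).1).trans hx)
    ξ (N * Real.exp (-κ)) (by positivity) hstep T lam0 le_rfl
  set Ω := univ.filter (fun s : Fin T → Finset (Fin n) => ∀ t, (s t).card = τ) with hΩ
  have hΩcard : (Ω.card : ℝ) = N ^ T := by
    have : Ω = Fintype.piFinset (fun _ : Fin T => P) := by
      ext s; simp [hΩ, hPdef, Fintype.mem_piFinset]
    rw [this, Fintype.card_piFinset_const, hNdef]; push_cast; rfl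
  set Q : (Fin T → Finset (Fin n)) → Prop := fun s => fExp m (A.mulVec (iter m A β lam0
          (fun t => if h : t < T then s ⟨t, h⟩ else ∅) T)) - fbar ≤ ε with hQ
  have hsplit : (univ.filter (fun s : Fin T → Finset (Fin n) =>
      (∀ t, (s t).card = τ) ∧ Q s)) = Ω.filter Q := by
    rw [hΩ, Finset.filter_filter]
  have hadd := Finset.card_filter_add_card_filter_not (s := Ω) Q
  have hadd' : ((Ω.filter Q).card : ℝ) + ((Ω.filter (fun s => ¬ Q s)).card : ℝ) = Ω.card := by
    exact_mod_cast hadd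
  change ((univ.filter (fun s : Fin T → Finset (Fin n) =>
      (∀ t, (s t).card = τ) ∧ Q s)).card : ℝ) ≥ (1 - ρ) * (Ω.card : ℝ)
  rw [hsplit]
  suffices hbad : ((Ω.filter (fun s => ¬ Q s)).card : ℝ) ≤ ρ * Ω.card by linarith
  set δ := ε / (2 * fbar) with hδ
  have hδ0 : 0 < δ := by positivity
  have hδ1 : δ < 1 := by rw [hδ, div_lt_one (by positivity)]; exact hε2
  have hQξ : ∀ l : Fin n → ℝ, ¬ (fExp m (A.mulVec l) - fbar ≤ ε) → δ ≤ ξ l := by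
    intro l hl
    by_contra hlt
    push Not at hlt
    apply hl
    have h1 : fExp m (A.mulVec l) = fbar * Real.exp (ξ l) := by
      simp only [ξ, FObj]
      rw [Real.exp_sub, Real.exp_log (hfp _), Real.exp_log hfbarpos]
      field_simp
    have h2 : Real.exp (ξ l) ≤ Real.exp δ := Real.exp_le_exp.mpr hlt.le
    have h3 : Real.exp δ ≤ 1 + 2 * δ := by
      have := Real.abs_exp_sub_one_le (x := δ) (by rw [abs_of_pos hδ0]; exact hδ1.le)
      rw [abs_of_pos hδ0] at this
      linarith [le_abs_self (Real.exp δ - 1)]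
    have h4 : fbar * Real.exp (ξ l) ≤ fbar * (1 + 2 * δ) :=
      mul_le_mul_of_nonneg_left (h2.trans h3) hfbarpos.le
    have h5 : fbar * (1 + 2 * δ) = fbar + ε := by rw [hδ]; field_simp
    linarith
  have hmarkov : δ * ((Ω.filter (fun s => ¬ Q s)).card : ℝ) ≤
      (N * Real.exp (-κ)) ^ T * ξ lam0 := by
    refine le_trans ?_ hcount
    calc δ * ((Ω.filter (fun s => ¬ Q s)).card : ℝ)
        = ∑ s ∈ Ω.filter (fun s => ¬ Q s), δ := by
          rw [Finset.sum_const, nsmul_eq_mul, mul_comm]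
      _ ≤ ∑ s ∈ Ω.filter (fun s => ¬ Q s), ξ (iter m A β lam0
          (fun t => if h : t < T then s ⟨t, h⟩ else ∅) T) :=
          Finset.sum_le_sum fun s hs => hQξ _ (Finset.mem_filter.mp hs).2
      _ ≤ _ := Finset.sum_le_sum_of_subset_of_nonneg (Finset.filter_subset _ _)
          fun s _ _ => hξ0 _
  have hfin : Real.exp (-κ) ^ T * ξ lam0 ≤ δ * ρ := by
    rcases (hfb lam0).eq_or_lt with h | h
    · have : ξ lam0 = 0 := by simp only [ξ, FObj]; rw [← h]; simp
      rw [this, mul_zero]; positivity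
    · have hdpos : 0 < fExp m (A.mulVec lam0) - fbar := sub_pos.mpr h
      set d := fExp m (A.mulVec lam0) - fbar with hd
      have hξd : ξ lam0 ≤ d / fbar := by
        simp only [ξ, FObj]
        rw [← Real.log_div (hfp _).ne' hfbarpos.ne']
        have := Real.log_le_sub_one_of_pos (div_pos (hfp (A.mulVec lam0)) hfbarpos)
        have e : fExp m (A.mulVec lam0) / fbar - 1 = d / fbar := by rw [hd]; field_simp
        linarith
      have hTκ : Real.log (2 * d / (ε * ρ)) ≤ κ * T := by
        have := mul_le_mul_of_nonneg_left hT hκpos.le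
        refine le_trans (le_of_eq ?_) this
        rw [hκ]; field_simp
      have hE : Real.exp (-κ) ^ T ≤ (ε * ρ) / (2 * d) := by
        rw [← Real.exp_nat_mul]
        calc Real.exp (T * -κ) ≤ Real.exp (- Real.log (2 * d / (ε * ρ))) :=
              Real.exp_le_exp.mpr (by linarith)
          _ = _ := by rw [Real.exp_neg, Real.exp_log (by positivity), inv_div]
      calc _ ≤ (ε * ρ) / (2 * d) * (d / fbar) :=
            mul_le_mul hE hξd (hξ0 _) (by positivity)
        _ = δ * ρ := by rw [hδ]; field_simp
  have hNT : 0 ≤ N ^ T := pow_nonneg hN0 T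
  rw [mul_pow, mul_assoc] at hmarkov
  have h9 := hmarkov.trans (mul_le_mul_of_nonneg_left hfin hNT)
  rw [hΩcard]
  refine le_of_mul_le_mul_left ?_ hδ0
  linarith
end
end
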